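/- arXiv:1202.0874 — 4 statements merged into one kernel-verified Lean document; each statement's English description precedes it below -/
import Mathlib

section
/- Let p and q be positive integers, let s be a real number with s > 1, let x be a complex number with |x| = 1, and let θ ∈ [−π, π]. Then Σ_{l ≠ 0, m ≥ 1, l+m ≠ 0} (−1)^{l+m} x^m e^{i(l+m)θ} / (l^p m^s (l+m)^q) − 2 Σ_{j=0}^{p} φ(p−j) ε_{p−j} Σ_{ξ=0}^{j} C(q−1+j−ξ, q−1) (−1)^{j−ξ} (Σ_{m=1}^{∞} (−1)^m x^m e^{imθ} / m^{s+q+j−ξ}) (iθ)^ξ/ξ! + 2 Σ_{j=0}^{q} φ(q−j) ε_{q−j} Σ_{ξ=0}^{j} C(p−1+j−ξ, p−1) (−1)^{p−1} (Σ_{m=1}^{∞} x^m / m^{s+p+j−ξ}) (iθ)^ξ/ξ! = 0, where C(n,k) denotes the binomial coefficient and the first sum runs over integers l ≠ 0 and integers m ≥ 1 with l + m ≠ 0 (it converges absolutely). -/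
open Complex Finset Real

/-- `φ(s) = (2^{1-s} - 1) ζ(s)` for `s ≠ 1`, and `φ(1) := -log 2`. -/
noncomputable def phi (s : ℂ) : ℂ :=
  if s = 1 then -(Real.log 2 : ℂ) else ((2 : ℂ) ^ ((1 : ℂ) - s) - 1) * riemannZeta s

/-- `ε_m = (1 + (-1)^m)/2`. -/
noncomputable def eps (m : ℕ) : ℂ := (1 + (-1 : ℂ) ^ m) / 2

/-!
For fixed `m`, the sum `a_{p,q}` over `l` of `e^{2πi(l+m)t} / (l^p (l+m)^q)` satisfies the partial
fraction recursion `m a_{p+1,q+1} = a_{p+1,q} - a_{p,q+1}`. Solving it expresses `a_{p,q}` through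
the values `∑_{l ≠ 0} e^{2πilt} / l^k` of Bernoulli polynomials; the points `l = 0` and `l = -m`,
which are missing from the sum, are accounted for exactly by assigning the value `-1` at `k = 0`.
Since the series for `k = 1` converges only conditionally, the starting case `p = q = 1` is obtained
from the continuous function `(e^{2πimt} - 1) B_1(t)`. At `t = 1/2 + θ/2π` the Bernoulli values
become the convolution of the `φ(k) ε_k` with the powers of `iθ`, and summing over `m` produces the
polylogarithms.
-/

lemma sum_mul_sum_convolution_left_comm {R : Type*} [CommSemiring R] (a c y : ℕ → R) (n : ℕ) :
    ∑ j ∈ range (n + 1), a (n - j) * ∑ ξ ∈ range (j + 1), c (j - ξ) * y ξ =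
      ∑ r ∈ range (n + 1), c r * ∑ ξ ∈ range (n - r + 1), a (n - r - ξ) * y ξ := by
  have coeff_mk_mul : ∀ (b : ℕ → R) (F : PowerSeries R) (k : ℕ),
      PowerSeries.coeff k (PowerSeries.mk b * F) =
        ∑ j ∈ range (k + 1), b (k - j) * PowerSeries.coeff j F := fun b F k => by
    rw [mul_comm, PowerSeries.coeff_mul, Nat.sum_antidiagonal_eq_sum_range_succ_mk]
    simp only [PowerSeries.coeff_mk, mul_comm]
  have h := congrArg (PowerSeries.coeff n)
    (mul_left_comm (PowerSeries.mk a) (PowerSeries.mk c) (PowerSeries.mk y))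
  simp only [coeff_mk_mul, PowerSeries.coeff_mk] at h
  rw [h, ← sum_range_reflect]
  refine sum_congr rfl fun r hr => ?_
  have hr' : r ≤ n := by simpa [Nat.lt_succ_iff] using hr
  simp only [Nat.add_sub_cancel, Nat.sub_sub_self hr']

lemma bernoulliFun_add_div_factorial (n : ℕ) (x y : ℝ) :
    bernoulliFun n (x + y) / n.factorial =
      ∑ ξ ∈ range (n + 1),
        bernoulliFun (n - ξ) x / (n - ξ).factorial * (y ^ ξ / ξ.factorial) := by
  let B : ℝ → PowerSeries ℝ := fun t => PowerSeries.mk fun k => bernoulliFun k t / k.factorial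
  have hgen : ∀ t, B t * (PowerSeries.exp ℝ - 1) =
      PowerSeries.X * PowerSeries.rescale t (PowerSeries.exp ℝ) := fun t => by
    rw [← Polynomial.bernoulli_generating_function t]
    congr 2
    ext k
    simp only [B, PowerSeries.coeff_mk, bernoulliFun, Polynomial.eval_map_algebraMap,
      map_smul, Rat.smul_def]
    push_cast
    ring
  have hexp : PowerSeries.exp ℝ - 1 ≠ 0 := fun h => by
    simpa using congrArg (PowerSeries.coeff 1) h
  have hB : B (x + y) = B x * PowerSeries.rescale y (PowerSeries.exp ℝ) := by
    refine mul_right_cancel₀ hexp ?_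
    rw [hgen, ← PowerSeries.exp_mul_exp_eq_exp_add, mul_right_comm, hgen, mul_assoc]
  have h := congrArg (PowerSeries.coeff n) hB
  rw [mul_comm, PowerSeries.coeff_mul, Nat.sum_antidiagonal_eq_sum_range_succ_mk] at h
  simpa [B, PowerSeries.coeff_rescale, PowerSeries.coeff_exp, mul_comm, div_eq_mul_inv] using h

/-- The value `-(2πi)^k B_k(t) / k!` of `∑_{l ≠ 0} e^{2πilt} / l^k` for `k ≥ 2` and `t ∈ [0, 1]`;
at `k = 0` it is the value `-1` that makes the formulas below uniform in `k`. -/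
noncomputable def bernoulliSum (t : ℝ) (k : ℕ) : ℂ :=
  -(2 * π * I) ^ k / k.factorial * bernoulliFun k t

lemma bernoulliSum_zero (t : ℝ) : bernoulliSum t 0 = -1 := by
  simp [bernoulliSum]

lemma bernoulliSum_add (n : ℕ) (x y : ℝ) :
    bernoulliSum (x + y) n =
      ∑ ξ ∈ range (n + 1), bernoulliSum x (n - ξ) * ((2 * π * I * y) ^ ξ / ξ.factorial) := by
  have h := congrArg (fun b : ℝ => -(2 * π * I) ^ n * (b : ℂ))
    (bernoulliFun_add_div_factorial n x y)
  push_cast [mul_sum] at h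
  rw [bernoulliSum, div_mul_eq_mul_div, mul_div_assoc, h]
  refine sum_congr rfl fun ξ hξ => ?_
  rw [bernoulliSum, ← pow_sub_mul_pow _ (Nat.lt_succ_iff.mp (mem_range.mp hξ)), mul_pow _ (y : ℂ)]
  ring

lemma two_mul_phi_mul_eps (k : ℕ) : 2 * (phi k * eps k) = bernoulliSum 2⁻¹ k := by
  rcases Nat.even_or_odd' k with ⟨n, rfl | rfl⟩
  · rcases n with _ | n
    · norm_num [phi, eps, riemannZeta_zero, bernoulliSum]
    · have hne : ((2 * (n + 1) : ℕ) : ℂ) ≠ 1 := by norm_cast; lia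
      have hpow : (2 : ℂ) ^ ((1 : ℂ) - (2 * (n + 1) : ℕ)) = 2 / 2 ^ (2 * (n + 1)) := by
        rw [cpow_sub _ _ two_ne_zero, cpow_one, cpow_natCast]
      have hzeta := riemannZeta_two_mul_nat (Nat.add_one_ne_zero n)
      rw [← Nat.cast_ofNat, ← Nat.cast_mul] at hzeta
      rw [phi, if_neg hne, hpow, hzeta, bernoulliSum, bernoulliFun_eval_half, eps,
        (even_two_mul _).neg_one_pow, mul_pow (2 * (π : ℂ)), pow_mul I, I_sq, mul_pow 2 (π : ℂ),
        show 2 * (n + 1) - 1 = 2 * n + 1 by lia]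
      push_cast
      field_simp
      ring
  · have hodd := (odd_two_mul_add_one n).neg_one_pow (α := ℂ)
    simp [bernoulliSum, bernoulliFun_eval_half_eq_zero, eps, hodd]

lemma bernoulliSum_half_add (θ : ℝ) (n : ℕ) :
    bernoulliSum (2⁻¹ + θ / (2 * π)) n =
      2 * ∑ ξ ∈ range (n + 1), phi ((n - ξ : ℕ) : ℂ) * eps (n - ξ) *
        ((I * θ) ^ ξ / ξ.factorial) := by
  have hθ : 2 * π * I * ((θ / (2 * π) : ℝ) : ℂ) = I * θ := by
    push_cast
    field_simp
  rw [bernoulliSum_add, hθ, mul_sum]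
  simp only [← two_mul_phi_mul_eps, mul_assoc]

lemma two_mul_sum_phi_mul_eps (c : ℕ → ℂ) (θ : ℝ) (n : ℕ) :
    2 * ∑ j ∈ range (n + 1), phi ((n - j : ℕ) : ℂ) * eps (n - j) *
        ∑ ξ ∈ range (j + 1), c (j - ξ) * (I * θ) ^ ξ / ξ.factorial =
      ∑ r ∈ range (n + 1), c r * bernoulliSum (2⁻¹ + θ / (2 * π)) (n - r) := by
  simp only [mul_div_assoc]
  rw [sum_mul_sum_convolution_left_comm (fun k => phi (k : ℂ) * eps k), mul_sum]
  simp only [bernoulliSum_half_add, mul_left_comm (2 : ℂ)]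

/-- The polylogarithm `Li_s(z) = ∑_{m ≥ 1} z^m / m^s`. -/
noncomputable def polylog (s z : ℂ) : ℂ :=
  ∑' m : ℕ, z ^ (m + 1) / ((m + 1 : ℕ) : ℂ) ^ s

lemma polylog_def (s z : ℂ) : polylog s z = ∑' m : ℕ, z ^ (m + 1) / ((m + 1 : ℕ) : ℂ) ^ s := rfl

lemma hasSum_polylog {s z : ℂ} (hs : 1 < s.re) (hz : ‖z‖ ≤ 1) :
    HasSum (fun m : ℕ => z ^ (m + 1) / ((m + 1 : ℕ) : ℂ) ^ s) (polylog s z) := by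
  have hbound : Summable fun m : ℕ => 1 / ((m + 1 : ℕ) : ℝ) ^ s.re :=
    (Real.summable_one_div_nat_rpow.mpr hs).comp_injective (add_left_injective 1)
  refine (Summable.of_norm_bounded hbound fun m => ?_).hasSum
  rw [norm_div, norm_natCast_cpow_of_pos m.succ_pos, norm_pow]
  gcongr
  exact pow_le_one₀ (norm_nonneg z) hz

section PartialFractions

variable {K : Type*} [Field K]

/-- The principal part `∑_{r < p} (q multichoose r) z^r / (m^{q+r} l^{p-r})` at the pole of order
`p` of a partial fraction decomposition, with each power `l^{-k}` replaced by `S k`. The sum also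
contains the term `r = p`, weighted by `S 0`. -/
def poleSum (S : ℕ → K) (z m : K) (p q : ℕ) : K :=
  ∑ r ∈ range (p + 1), Nat.multichoose q r * z ^ r / m ^ (q + r) * S (p - r)

/-- The partial fraction decomposition of `1 / (l^p (l + m)^q)`, with `l^{-k}` replaced by
`u * S k` and `(l + m)^{-k}` by `S k`. -/
def partialFractionSum (S : ℕ → K) (u m : K) (p q : ℕ) : K :=
  u * poleSum S (-1) m p q + (-1) ^ p * poleSum S 1 m q p

lemma poleSum_zero_left (S : ℕ → K) (z m : K) (q : ℕ) : poleSum S z m 0 q = S 0 / m ^ q := by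
  simp [poleSum, div_eq_inv_mul]

lemma poleSum_zero_right (S : ℕ → K) (z m : K) (p : ℕ) : poleSum S z m p 0 = S p := by
  rw [poleSum, sum_range_succ']
  simp [Nat.multichoose_zero_succ]

lemma partialFractionSum_zero_left {S : ℕ → K} (hS : S 0 = -1) (u m : K) (q : ℕ) :
    partialFractionSum S u m 0 q = S q - u / m ^ q := by
  rw [partialFractionSum, poleSum_zero_left, poleSum_zero_right, hS]
  ring

lemma partialFractionSum_zero_right {S : ℕ → K} (hS : S 0 = -1) (u m : K) (p : ℕ) :
    partialFractionSum S u m p 0 = u * S p - 1 / (-m) ^ p := by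
  rw [partialFractionSum, poleSum_zero_left, poleSum_zero_right, hS, neg_pow m, ← div_div, one_div,
    ← inv_pow, inv_neg_one]
  ring

lemma partialFractionSum_one_one {S : ℕ → K} (hS : S 0 = -1) (u m : K) :
    partialFractionSum S u m 1 1 = (u - 1) * S 1 / m + u / m ^ 2 + 1 / m ^ 2 := by
  simp only [partialFractionSum, poleSum, sum_range_succ, sum_range_zero,
    Nat.multichoose_one_right, Nat.multichoose_zero_right, hS]
  ring

lemma mul_poleSum_succ_succ (S : ℕ → K) (z : K) {m : K} (hm : m ≠ 0) (p q : ℕ) :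
    m * poleSum S z m (p + 1) (q + 1) =
      poleSum S z m (p + 1) q + z * poleSum S z m p (q + 1) := by
  have hterm (r : ℕ) :
      m * (Nat.multichoose (q + 1) (r + 1) * z ^ (r + 1) / m ^ (q + 1 + (r + 1)) * S (p - r)) =
        Nat.multichoose q (r + 1) * z ^ (r + 1) / m ^ (q + (r + 1)) * S (p - r) +
          z * (Nat.multichoose (q + 1) r * z ^ r / m ^ (q + 1 + r) * S (p - r)) := by
    rw [Nat.multichoose_succ_succ]
    push_cast
    field_simp
    ring
  have hzero : m * (1 / m ^ (q + 1) * S (p + 1)) = 1 / m ^ q * S (p + 1) := by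
    field_simp
    ring
  rw [poleSum, poleSum, poleSum, sum_range_succ' _ (p + 1), sum_range_succ' _ (p + 1), mul_add,
    mul_sum, mul_sum]
  simp only [Nat.add_sub_add_right, hterm, sum_add_distrib, Nat.multichoose_zero_right,
    Nat.cast_one, pow_zero, add_zero, Nat.sub_zero, one_mul]
  linear_combination hzero

lemma partialFractionSum_succ_succ (S : ℕ → K) (u : K) {m : K} (hm : m ≠ 0) (p q : ℕ) :
    partialFractionSum S u m (p + 1) (q + 1) =
      (partialFractionSum S u m (p + 1) q - partialFractionSum S u m p (q + 1)) / m := by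
  rw [eq_div_iff hm]
  unfold partialFractionSum
  linear_combination u * mul_poleSum_succ_succ S (-1) hm p q +
    (-1) ^ (p + 1) * mul_poleSum_succ_succ S 1 hm q p

end PartialFractions

lemma fourierCoeff_fourier_sub_one_mul {T : ℝ} [Fact (0 < T)] {f : AddCircle T → ℂ}
    (hf : MeasureTheory.Integrable f AddCircle.haarAddCircle) (m n : ℤ) :
    fourierCoeff (fun t => (fourier m t - 1) * f t) n =
      fourierCoeff f (n - m) - fourierCoeff f n := by
  simp only [fourierCoeff]
  rw [← MeasureTheory.integral_sub (hf.fourier_smul _) (hf.fourier_smul _)]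
  congr 1 with t
  rw [neg_sub, sub_eq_add_neg m, fourier_add]
  simp only [smul_eq_mul]
  ring

lemma continuous_mul_liftIoc {T : ℝ} [Fact (0 < T)] {h : AddCircle T → ℂ} (hh : Continuous h)
    (h_zero : h 0 = 0) {f : ℝ → ℂ} (hf : ContinuousOn f (Set.Icc 0 T)) :
    Continuous fun t => h t * AddCircle.liftIoc T 0 f t := by
  have hlift : (fun t => h t * AddCircle.liftIoc T 0 f t) =
      AddCircle.liftIoc T 0 fun t => h t * f t := by
    ext t
    obtain ⟨u, hu, rfl⟩ := AddCircle.eq_coe_Ioc t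
    rw [AddCircle.liftIoc_zero_coe_apply hu, AddCircle.liftIoc_zero_coe_apply hu]
  rw [hlift]
  refine AddCircle.liftIoc_zero_continuous ?_ ?_
  · simp [AddCircle.coe_period, h_zero]
  · exact (hh.comp (AddCircle.continuous_mk' T)).continuousOn.mul hf

lemma summable_one_div_sub_one_div_add (m : ℤ) :
    Summable fun l : ℤ => (1 : ℂ) / l - 1 / (l + m : ℤ) := by
  have hprod : Summable fun l : ℤ => (m : ℂ) * ((l : ℂ) * (l + m))⁻¹ := by
    simpa using (EisensteinSeries.summable_linear_left_mul_linear_left one_ne_zero 0 m).mul_left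
      (m : ℂ)
  refine (summable_congr_cofinite ?_).mpr hprod
  refine (Set.toFinite {0, -m}).subset fun l hl => ?_
  by_contra hpole
  simp only [Set.mem_insert_iff, Set.mem_singleton_iff, not_or, eq_neg_iff_add_eq_zero] at hpole
  have hl_ne : (l : ℂ) ≠ 0 := Int.cast_ne_zero.mpr hpole.1
  have hlm_ne : (l + m : ℂ) ≠ 0 := by exact_mod_cast hpole.2
  refine hl ?_
  simp only [Set.mem_ofPred_eq, Int.cast_add]
  field_simp
  ring

lemma fourierCoeff_liftIoc_bernoulliFun {k : ℕ} (hk : k ≠ 0) (n : ℤ) :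
    fourierCoeff (AddCircle.liftIoc 1 0 fun t => (bernoulliFun k t : ℂ)) n =
      -k.factorial / (2 * π * I * n) ^ k := by
  rw [fourierCoeff_liftIoc_eq]
  simpa only [zero_add] using! bernoulliFourierCoeff_eq hk n

lemma integrable_liftIoc {T : ℝ} [Fact (0 < T)] {f : ℝ → ℂ} (hf : Continuous f) :
    MeasureTheory.Integrable (AddCircle.liftIoc T 0 f) AddCircle.haarAddCircle := by
  rw [← MeasureTheory.memLp_one_iff_integrable, MeasureTheory.memLp_haarAddCircle_iff]
  refine MeasureTheory.MemLp.memLp_liftIoc ?_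
  rw [MeasureTheory.memLp_one_iff_integrable]
  exact hf.integrableOn_Ioc

/-- `B_1` jumps at the integers, so its Fourier series does not converge absolutely; the factor
`e^{2πimt} - 1` removes the jump. -/
lemma hasSum_fourier_mul_one_div_sub (m : ℤ) {t : ℝ} (ht : t ∈ Set.Icc 0 1) :
    HasSum (fun l : ℤ => fourier (l + m) (t : UnitAddCircle) * ((1 : ℂ) / l - 1 / (l + m : ℤ)))
      ((fourier m (t : UnitAddCircle) - 1) * bernoulliSum t 1) := by
  let B : UnitAddCircle → ℂ := AddCircle.liftIoc 1 0 fun u => (bernoulliFun 1 u : ℂ)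
  have hB : Continuous fun u : ℝ => (bernoulliFun 1 u : ℂ) :=
    continuous_ofReal.comp (continuous_bernoulliFun 1)
  let F : C(UnitAddCircle, ℂ) :=
    ⟨fun u => (fourier m u - 1) * B u, continuous_mul_liftIoc
      ((fourier m).continuous.sub continuous_const) (by simp) hB.continuousOn⟩
  have hcoeff (l : ℤ) :
      fourierCoeff F (l + m) = -(2 * π * I)⁻¹ * (1 / l - 1 / (l + m : ℤ)) := by
    simp only [F, ContinuousMap.coe_mk, fourierCoeff_fourier_sub_one_mul (integrable_liftIoc hB),
      B, fourierCoeff_liftIoc_bernoulliFun one_ne_zero, add_sub_cancel_right,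
      Nat.factorial_one, Nat.cast_one, pow_one]
    ring
  have hsummable : Summable (fourierCoeff F) := by
    rw [← (Equiv.addRight m).summable_iff]
    simpa only [Function.comp_def, Equiv.coe_addRight, hcoeff] using
      (summable_one_div_sub_one_div_add m).mul_left (-(2 * π * I)⁻¹)
  have hvalue : (fourier m (t : UnitAddCircle) - 1) * bernoulliSum t 1 = -(2 * π * I) * F t := by
    rcases ht.1.eq_or_lt with rfl | ht_pos
    · simp [F]
    · simp only [F, ContinuousMap.coe_mk, B, AddCircle.liftIoc_zero_coe_apply ⟨ht_pos, ht.2⟩,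
        bernoulliSum, Nat.factorial_one, Nat.cast_one, pow_one]
      ring
  have hsum := ((Equiv.addRight m).hasSum_iff.mpr
    (has_pointwise_sum_fourier_series_of_summable hsummable (t : UnitAddCircle))).mul_left
      (-(2 * π * I))
  rw [hvalue]
  refine hsum.congr_fun fun l => ?_
  simp only [Function.comp_apply, Equiv.coe_addRight, hcoeff, smul_eq_mul]
  field_simp

lemma hasSum_fourier_div_pow {k : ℕ} (hk : 2 ≤ k) {t : ℝ} (ht : t ∈ Set.Icc 0 1) :
    HasSum (fun l : ℤ => fourier l (t : UnitAddCircle) / (l : ℂ) ^ k) (bernoulliSum t k) := by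
  simpa only [one_div_mul_eq_div] using! hasSum_one_div_pow_mul_fourier_mul_bernoulliFun hk ht

lemma hasSum_ite_ne_and_ne {α G : Type*} [AddCommGroup G] [TopologicalSpace G]
    [IsTopologicalAddGroup G] [DecidableEq α] {f : α → G} {s : G} (hf : HasSum f s) {a b : α}
    (hab : a ≠ b) :
    HasSum (fun l => if l ≠ a ∧ l ≠ b then f l else 0) (s - f a - f b) := by
  convert (hf.update a 0).update b 0 using 1
  · ext l
    by_cases hb : l = b <;> by_cases ha : l = a <;> simp [Function.update_apply, ha, hb]
  · rw [Function.update_of_ne hab.symm]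
    abel

/-- The inner summand `e^{2πi(l+m)t} / (l^p (l+m)^q)` of the double series, set to `0` at the two
excluded points `l = 0` and `l = -m`. -/
noncomputable def latticeTerm (t : ℝ) (m : ℤ) (p q : ℕ) (l : ℤ) : ℂ :=
  if l ≠ 0 ∧ l + m ≠ 0 then
    fourier (l + m) (t : UnitAddCircle) / ((l : ℂ) ^ p * ((l + m : ℤ) : ℂ) ^ q)
  else 0

section LatticeTerm

variable {t : ℝ} {m : ℤ}

lemma latticeTerm_succ_succ (hm : m ≠ 0) (p q : ℕ) (l : ℤ) :
    latticeTerm t m (p + 1) (q + 1) l =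
      (latticeTerm t m (p + 1) q l - latticeTerm t m p (q + 1) l) / m := by
  unfold latticeTerm
  split_ifs with hl
  · have hm' : (m : ℂ) ≠ 0 := Int.cast_ne_zero.mpr hm
    have hl' : (l : ℂ) ≠ 0 := Int.cast_ne_zero.mpr hl.1
    have hlm : (l + m : ℂ) ≠ 0 := by exact_mod_cast hl.2
    push_cast
    field_simp
    ring
  · simp

lemma hasSum_latticeTerm_of_hasSum (hm : m ≠ 0) {p q : ℕ} {f : ℤ → ℂ} {s : ℂ} (hf : HasSum f s)
    (hterm : ∀ l : ℤ, l ≠ 0 → l + m ≠ 0 →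
      fourier (l + m) (t : UnitAddCircle) / ((l : ℂ) ^ p * ((l + m : ℤ) : ℂ) ^ q) = f l) :
    HasSum (latticeTerm t m p q) (s - f 0 - f (-m)) := by
  refine (hasSum_ite_ne_and_ne hf (neg_ne_zero.mpr hm).symm).congr_fun fun l => ?_
  simp only [latticeTerm, ne_eq, eq_neg_iff_add_eq_zero]
  split_ifs with hl
  · exact hterm l hl.1 hl.2
  · rfl

lemma hasSum_latticeTerm_zero_left (hm : m ≠ 0) (ht : t ∈ Set.Icc 0 1) {q : ℕ} (hq : 2 ≤ q) :
    HasSum (latticeTerm t m 0 q)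
      (partialFractionSum (bernoulliSum t) (fourier m (t : UnitAddCircle)) m 0 q) := by
  have hq' : q ≠ 0 := by lia
  rw [partialFractionSum_zero_left (bernoulliSum_zero t)]
  convert hasSum_latticeTerm_of_hasSum hm
    ((Equiv.addRight m).hasSum_iff.mpr (hasSum_fourier_div_pow hq ht)) fun l _ _ => ?_ using 1
  · simp [hq', -fourier_apply]
  · simp [-fourier_apply]

lemma hasSum_latticeTerm_zero_right (hm : m ≠ 0) (ht : t ∈ Set.Icc 0 1) {p : ℕ} (hp : 2 ≤ p) :
    HasSum (latticeTerm t m p 0)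
      (partialFractionSum (bernoulliSum t) (fourier m (t : UnitAddCircle)) m p 0) := by
  have hp' : p ≠ 0 := by lia
  have hinv : fourier m (t : UnitAddCircle) * fourier (-m) (t : UnitAddCircle) = 1 := by
    rw [← fourier_add, add_neg_cancel, fourier_zero]
  rw [partialFractionSum_zero_right (bernoulliSum_zero t), ← hinv]
  convert hasSum_latticeTerm_of_hasSum hm
    ((hasSum_fourier_div_pow hp ht).mul_left (fourier m (t : UnitAddCircle)))
      fun l _ _ => ?_ using 1
  · simp [hp', mul_div_assoc, -fourier_apply]
  · rw [fourier_add]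
    ring

lemma hasSum_latticeTerm_one_one (hm : m ≠ 0) (ht : t ∈ Set.Icc 0 1) :
    HasSum (latticeTerm t m 1 1)
      (partialFractionSum (bernoulliSum t) (fourier m (t : UnitAddCircle)) m 1 1) := by
  have hm' : (m : ℂ) ≠ 0 := Int.cast_ne_zero.mpr hm
  rw [partialFractionSum_one_one (bernoulliSum_zero t)]
  convert hasSum_latticeTerm_of_hasSum hm
    ((hasSum_fourier_mul_one_div_sub m ht).div_const (m : ℂ)) fun l hl hlm => ?_ using 1
  · simp only [zero_add, neg_add_cancel, fourier_zero, Int.cast_zero, Int.cast_neg]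
    ring
  · have hl' : (l : ℂ) ≠ 0 := Int.cast_ne_zero.mpr hl
    have hlm' : (l + m : ℂ) ≠ 0 := by exact_mod_cast hlm
    push_cast
    field_simp
    ring

theorem hasSum_latticeTerm (hm : m ≠ 0) (ht : t ∈ Set.Icc 0 1) {p q : ℕ} (hpq : 2 ≤ p + q) :
    HasSum (latticeTerm t m p q)
      (partialFractionSum (bernoulliSum t) (fourier m (t : UnitAddCircle)) m p q) := by
  induction hn : p + q generalizing p q with
  | zero => lia
  | succ n ih =>
    match p, q with
    | 0, q => exact hasSum_latticeTerm_zero_left hm ht (by lia)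
    | p + 1, 0 => exact hasSum_latticeTerm_zero_right hm ht (by lia)
    | p + 1, q + 1 =>
      by_cases hbase : p = 0 ∧ q = 0
      · obtain ⟨rfl, rfl⟩ := hbase
        exact hasSum_latticeTerm_one_one hm ht
      · rw [partialFractionSum_succ_succ _ _ (Int.cast_ne_zero.mpr hm)]
        simp only [funext (latticeTerm_succ_succ hm p q)]
        exact ((ih (by lia) (by lia)).sub (ih (by lia) (by lia))).div_const _

end LatticeTerm

lemma one_div_mul_le_rpow_mul_add {a b m δ : ℝ} (ha : 0 < a) (hb : 0 < b) (hm : 0 < m)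
    (hmab : m ≤ a + b) (hδ₀ : 0 ≤ δ) (hδ₁ : δ ≤ 1) :
    1 / (a * b) ≤ m ^ (δ - 1) * (a ^ (-(1 + δ)) + b ^ (-(1 + δ))) := by
  have hfactor {c : ℝ} (hc : 0 < c) (hcab : c ≤ a + b) :
      (a + b)⁻¹ * c⁻¹ ≤ m ^ (δ - 1) * c ^ (-(1 + δ)) :=
    calc (a + b)⁻¹ * c⁻¹ = (a + b) ^ (δ - 1) * ((a + b) ^ (-δ) * c⁻¹) := by
          rw [← mul_assoc, ← Real.rpow_add (by positivity), show δ - 1 + -δ = -1 by ring,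
            Real.rpow_neg_one]
      _ ≤ m ^ (δ - 1) * (c ^ (-δ) * c⁻¹) := by
          gcongr ?_ * (?_ * _)
          · exact Real.rpow_le_rpow_of_nonpos hm hmab (by linarith)
          · exact Real.rpow_le_rpow_of_nonpos hc hcab (by linarith)
      _ = m ^ (δ - 1) * c ^ (-(1 + δ)) := by
          rw [← Real.rpow_neg_one c, ← Real.rpow_add hc]
          ring_nf
  calc 1 / (a * b) = (a + b)⁻¹ * a⁻¹ + (a + b)⁻¹ * b⁻¹ := by
        field_simp
        ring
    _ ≤ m ^ (δ - 1) * a ^ (-(1 + δ)) + m ^ (δ - 1) * b ^ (-(1 + δ)) :=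
        add_le_add (hfactor ha (by linarith)) (hfactor hb (by linarith))
    _ = _ := (mul_add _ _ _).symm

lemma norm_latticeTerm_le (t : ℝ) {m : ℤ} (hm : m ≠ 0) {p q : ℕ} (hp : 0 < p) (hq : 0 < q) {δ : ℝ}
    (hδ₀ : 0 ≤ δ) (hδ₁ : δ ≤ 1) (l : ℤ) :
    ‖latticeTerm t m p q l‖ ≤
      |(m : ℝ)| ^ (δ - 1) *
        (|(l : ℝ)| ^ (-(1 + δ)) + |((l + m : ℤ) : ℝ)| ^ (-(1 + δ))) := by
  unfold latticeTerm
  split_ifs with hl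
  · have one_le_abs {n : ℤ} (hn : n ≠ 0) : (1 : ℝ) ≤ |(n : ℝ)| := by
      exact_mod_cast Int.one_le_abs hn
    have hl₁ := one_le_abs hl.1
    have hlm₁ := one_le_abs hl.2
    have hm_le : |(m : ℝ)| ≤ |(l : ℝ)| + |((l + m : ℤ) : ℝ)| := by
      have := abs_sub ((l + m : ℤ) : ℝ) l
      rwa [Int.cast_add, add_sub_cancel_left, add_comm, ← Int.cast_add] at this
    calc _ = 1 / (|(l : ℝ)| ^ p * |((l + m : ℤ) : ℝ)| ^ q) := by
          rw [norm_div, fourier_apply, Circle.norm_coe, norm_mul, norm_pow, norm_pow,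
            Complex.norm_intCast, Complex.norm_intCast]
      _ ≤ 1 / (|(l : ℝ)| * |((l + m : ℤ) : ℝ)|) := by
          gcongr
          · exact le_self_pow₀ hl₁ hp.ne'
          · exact le_self_pow₀ hlm₁ hq.ne'
      _ ≤ _ := one_div_mul_le_rpow_mul_add (by positivity) (by positivity) (by positivity) hm_le
          hδ₀ hδ₁
  · rw [norm_zero]
    positivity

lemma summable_rpow_mul_add_shift {δ σ : ℝ} (hδ : 0 < δ) (hσ : 1 < σ) :
    Summable fun lm : ℤ × ℕ => ((lm.2 + 1 : ℕ) : ℝ) ^ (-σ) *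
      (|(lm.1 : ℝ)| ^ (-(1 + δ)) + |((lm.1 + (lm.2 + 1 : ℕ) : ℤ) : ℝ)| ^ (-(1 + δ))) := by
  have hint : Summable fun l : ℤ => |(l : ℝ)| ^ (-(1 + δ)) :=
    Real.summable_abs_int_rpow (by linarith)
  have hnat : Summable fun k : ℕ => ((k + 1 : ℕ) : ℝ) ^ (-σ) :=
    (Real.summable_nat_rpow.mpr (by linarith)).comp_injective (add_left_injective 1)
  have hprod := hnat.mul_of_nonneg hint (fun _ => by positivity) (fun _ => by positivity)
  have hswap : Summable fun lm : ℤ × ℕ => ((lm.2 + 1 : ℕ) : ℝ) ^ (-σ) * |(lm.1 : ℝ)| ^ (-(1 + δ)) :=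
    (Equiv.prodComm ℤ ℕ).summable_iff.mpr hprod
  have hinj : Function.Injective fun lm : ℤ × ℕ => (lm.1 + (lm.2 + 1 : ℕ), lm.2) := by
    rintro ⟨l, k⟩ ⟨l', k'⟩ h
    simp only [Prod.mk.injEq] at h ⊢
    lia
  have hshift := hswap.comp_injective hinj
  refine (hswap.add hshift).congr fun lm => ?_
  rw [mul_add]
  rfl

lemma summable_mul_latticeTerm (t : ℝ) {p q : ℕ} (hp : 0 < p) (hq : 0 < q) {s : ℂ} (hs : 0 < s.re)
    {x : ℂ} (hx : ‖x‖ ≤ 1) :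
    Summable fun lm : ℤ × ℕ =>
      x ^ (lm.2 + 1) / ((lm.2 + 1 : ℕ) : ℂ) ^ s * latticeTerm t (lm.2 + 1 : ℕ) p q lm.1 := by
  obtain ⟨δ, hδ₀, hδ⟩ := exists_between (lt_min one_pos hs)
  have hδ₁ : δ ≤ 1 := hδ.le.trans (min_le_left _ _)
  have hδs : δ < s.re := hδ.trans_le (min_le_right _ _)
  refine (summable_rpow_mul_add_shift (σ := s.re + 1 - δ) hδ₀ (by linarith)).of_norm_bounded
    fun ⟨l, k⟩ => ?_
  have hk : (0 : ℝ) < (k + 1 : ℕ) := by positivity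
  have hlattice := norm_latticeTerm_le t (m := (k + 1 : ℕ)) (by positivity) hp hq hδ₀.le hδ₁ l
  rw [Int.cast_natCast, abs_of_pos hk] at hlattice
  have hcoeff : ‖x ^ (k + 1) / ((k + 1 : ℕ) : ℂ) ^ s‖ ≤ ((k + 1 : ℕ) : ℝ) ^ (-s.re) := by
    rw [norm_div, norm_natCast_cpow_of_pos k.succ_pos, norm_pow, Real.rpow_neg hk.le, ← one_div]
    gcongr
    exact pow_le_one₀ (norm_nonneg x) hx
  rw [norm_mul]
  refine (mul_le_mul hcoeff hlattice (norm_nonneg _) (by positivity)).trans_eq ?_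
  rw [← mul_assoc, ← Real.rpow_add hk]
  ring_nf

lemma hasSum_mul_poleSum (S : ℕ → ℂ) (c : ℂ) {s z : ℂ} (p : ℕ) {q : ℕ} (hs : 1 < (s + q).re)
    (hz : ‖z‖ ≤ 1) :
    HasSum (fun k : ℕ => z ^ (k + 1) / ((k + 1 : ℕ) : ℂ) ^ s * poleSum S c (k + 1 : ℕ) p q)
      (∑ r ∈ range (p + 1), Nat.multichoose q r * c ^ r * polylog (s + q + r) z * S (p - r)) := by
  have hpolylog (r : ℕ) := hasSum_polylog (s := s + q + r)
    (by rw [add_re, natCast_re]; linarith [r.cast_nonneg (α := ℝ)]) hz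
  refine (hasSum_sum fun r _ =>
    ((hpolylog r).mul_left (Nat.multichoose q r * c ^ r)).mul_right (S (p - r))).congr_fun
      fun k => ?_
  have hk : ((k + 1 : ℕ) : ℂ) ≠ 0 := Nat.cast_ne_zero.mpr k.succ_ne_zero
  rw [poleSum, mul_sum]
  refine sum_congr rfl fun r _ => ?_
  rw [add_assoc, cpow_add _ _ hk, ← Nat.cast_add, cpow_natCast]
  field_simp

lemma fourier_natCast_eq_pow {T : ℝ} (n : ℕ) (t : AddCircle T) :
    fourier n t = fourier 1 t ^ n := by
  simp [fourier_apply, AddCircle.toCircle_nsmul]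

theorem hasSum_mul_latticeTerm {t : ℝ} (ht : t ∈ Set.Icc 0 1) {p q : ℕ} (hp : 0 < p) (hq : 0 < q)
    {s : ℂ} (hs : 0 < s.re) {x : ℂ} (hx : ‖x‖ ≤ 1) :
    HasSum (fun lm : ℤ × ℕ =>
        x ^ (lm.2 + 1) / ((lm.2 + 1 : ℕ) : ℂ) ^ s * latticeTerm t (lm.2 + 1 : ℕ) p q lm.1)
      ((∑ r ∈ range (p + 1), Nat.multichoose q r * (-1) ^ r *
          polylog (s + q + r) (x * fourier 1 (t : UnitAddCircle)) * bernoulliSum t (p - r)) +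
        (-1) ^ p * ∑ r ∈ range (q + 1), Nat.multichoose p r * polylog (s + p + r) x *
          bernoulliSum t (q - r)) := by
  have one_lt_re {n : ℕ} (hn : 0 < n) : 1 < (s + n).re := by
    rw [add_re, natCast_re]
    linarith [Nat.one_le_cast (α := ℝ) |>.mpr hn]
  have hxt : ‖x * fourier 1 (t : UnitAddCircle)‖ ≤ 1 := by
    rwa [norm_mul, fourier_apply, Circle.norm_coe, mul_one]
  have hsum := (summable_mul_latticeTerm t hp hq hs hx).hasSum
  have hinner (k : ℕ) := (hasSum_latticeTerm (m := (k + 1 : ℕ)) (by positivity) ht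
    (show 2 ≤ p + q by lia)).mul_left (x ^ (k + 1) / ((k + 1 : ℕ) : ℂ) ^ s)
  have houter := ((Equiv.prodComm ℕ ℤ).hasSum_iff.mpr hsum).prod_fiberwise hinner
  have hvalue := (hasSum_mul_poleSum (bernoulliSum t) (-1) p (one_lt_re hq) hxt).add
    ((hasSum_mul_poleSum (bernoulliSum t) 1 q (one_lt_re hp) hx).mul_left ((-1) ^ p))
  simp only [one_pow, mul_one] at hvalue
  rwa [houter.unique (hvalue.congr_fun fun k => ?_)] at hsum
  rw [partialFractionSum, fourier_natCast_eq_pow, Int.cast_natCast, mul_pow]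
  ring

lemma half_add_div_two_pi_mem_Icc {θ : ℝ} (hθ : θ ∈ Set.Icc (-π) π) :
    2⁻¹ + θ / (2 * π) ∈ Set.Icc (0 : ℝ) 1 := by
  rw [show 2⁻¹ + θ / (2 * π) = (π + θ) / (2 * π) by field_simp]
  exact ⟨div_nonneg (by linarith [hθ.1]) (by positivity),
    (div_le_one (by positivity)).mpr (by linarith [hθ.2])⟩

lemma fourier_half_add_div_two_pi (n : ℤ) (θ : ℝ) :
    fourier n ((2⁻¹ + θ / (2 * π) : ℝ) : UnitAddCircle) = (-1) ^ n * exp (I * n * θ) := by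
  rw [fourier_coe_apply, ← exp_pi_mul_I, ← exp_int_mul, ← Complex.exp_add]
  congr 1
  push_cast
  field_simp

lemma tsum_neg_one_pow_mul_exp_eq_polylog (s x : ℂ) (θ : ℝ) :
    ∑' m : ℕ, (-1 : ℂ) ^ (m + 1) * x ^ (m + 1) * exp (I * ((m : ℂ) + 1) * θ) /
        ((m + 1 : ℕ) : ℂ) ^ s =
      polylog s (x * fourier 1 ((2⁻¹ + θ / (2 * π) : ℝ) : UnitAddCircle)) := by
  refine tsum_congr fun m => ?_
  rw [mul_pow, ← fourier_natCast_eq_pow, fourier_half_add_div_two_pi, zpow_natCast]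
  push_cast
  ring

lemma ite_eq_mul_latticeTerm (p q : ℕ) (s x : ℂ) (θ : ℝ) (l : ℤ) (k : ℕ) :
    (if l ≠ 0 ∧ l + ((k : ℤ) + 1) ≠ 0 then
        (-1 : ℂ) ^ (l + ((k : ℤ) + 1)) * x ^ (k + 1) * exp (I * ((l + (k : ℤ) + 1 : ℤ) : ℂ) * θ) /
          ((l : ℂ) ^ p * ((k + 1 : ℕ) : ℂ) ^ s * ((l + (k : ℤ) + 1 : ℤ) : ℂ) ^ q)
      else 0) =
      x ^ (k + 1) / ((k + 1 : ℕ) : ℂ) ^ s *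
        latticeTerm (2⁻¹ + θ / (2 * π)) (k + 1 : ℕ) p q l := by
  rw [latticeTerm, fourier_half_add_div_two_pi, mul_ite, mul_zero, Nat.cast_succ (R := ℤ),
    ← add_assoc]
  refine if_congr Iff.rfl ?_ rfl
  ring

lemma choose_sub_one_add_eq_multichoose {n : ℕ} (hn : 0 < n) (r : ℕ) :
    Nat.choose (n - 1 + r) (n - 1) = Nat.multichoose n r := by
  rw [Nat.multichoose_eq, show n + r - 1 = n - 1 + r by lia, Nat.choose_symm_add]

theorem double_polylog_relation_general (p q : ℕ) (hp : 0 < p) (hq : 0 < q) (s : ℂ)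
    (hs : 0 < s.re) (x : ℂ) (hx : ‖x‖ ≤ 1) (θ : ℝ) (hθ : θ ∈ Set.Icc (-π) π) :
    HasSum
      (fun lm : ℤ × ℕ =>
        if lm.1 ≠ 0 ∧ lm.1 + ((lm.2 : ℤ) + 1) ≠ 0 then
          (-1 : ℂ) ^ (lm.1 + ((lm.2 : ℤ) + 1)) * x ^ (lm.2 + 1) *
              exp (I * ((lm.1 + (lm.2 : ℤ) + 1 : ℤ) : ℂ) * θ) /
            ((lm.1 : ℂ) ^ p * ((lm.2 + 1 : ℕ) : ℂ) ^ s *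
              ((lm.1 + (lm.2 : ℤ) + 1 : ℤ) : ℂ) ^ q)
        else 0)
      (2 * ∑ j ∈ range (p + 1), phi ((p - j : ℕ) : ℂ) * eps (p - j) *
          ∑ ξ ∈ range (j + 1),
            (Nat.choose (q - 1 + (j - ξ)) (q - 1) : ℂ) * (-1 : ℂ) ^ (j - ξ) *
              (∑' m : ℕ, (-1 : ℂ) ^ (m + 1) * x ^ (m + 1) * exp (I * ((m : ℂ) + 1) * θ) /
                ((m + 1 : ℕ) : ℂ) ^ (s + q + ((j - ξ : ℕ) : ℂ))) *
              (I * θ) ^ ξ / (Nat.factorial ξ : ℂ) -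
        2 * ∑ j ∈ range (q + 1), phi ((q - j : ℕ) : ℂ) * eps (q - j) *
          ∑ ξ ∈ range (j + 1),
            (Nat.choose (p - 1 + (j - ξ)) (p - 1) : ℂ) * (-1 : ℂ) ^ (p - 1) *
              (∑' m : ℕ, x ^ (m + 1) / ((m + 1 : ℕ) : ℂ) ^ (s + p + ((j - ξ : ℕ) : ℂ))) *
              (I * θ) ^ ξ / (Nat.factorial ξ : ℂ)) := by
  simp only [choose_sub_one_add_eq_multichoose hp, choose_sub_one_add_eq_multichoose hq,
    tsum_neg_one_pow_mul_exp_eq_polylog, ite_eq_mul_latticeTerm, ← polylog_def]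
  rw [two_mul_sum_phi_mul_eps (fun r => Nat.multichoose q r * (-1) ^ r *
      polylog (s + q + r) (x * fourier 1 ((2⁻¹ + θ / (2 * π) : ℝ) : UnitAddCircle))),
    two_mul_sum_phi_mul_eps (fun r => Nat.multichoose p r * (-1) ^ (p - 1) * polylog (s + p + r) x)]
  convert hasSum_mul_latticeTerm (half_add_div_two_pi_mem_Icc hθ) hp hq hs hx using 1
  rw [sub_eq_add_neg, ← sum_neg_distrib, mul_sum, ← mul_pow_sub_one hp.ne' (-1 : ℂ)]
  congr 1
  exact sum_congr rfl fun r _ => by ring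

/-- Lemma 4.3 of Komori–Matsumoto–Tsumura: a functional relation for double
polylogarithms.  The first sum runs over integers `l ≠ 0` and `m ≥ 1` with
`l + m ≠ 0` (here `m = lm.2 + 1`). -/
theorem double_polylog_relation (p q : ℕ) (hp : 0 < p) (hq : 0 < q) (s : ℝ) (hs : 1 < s)
    (x : ℂ) (hx : ‖x‖ = 1) (θ : ℝ) (hθ : θ ∈ Set.Icc (-π) π) :
    (∑' lm : ℤ × ℕ,
        if lm.1 ≠ 0 ∧ lm.1 + ((lm.2 : ℤ) + 1) ≠ 0 then
          (-1 : ℂ) ^ (lm.1 + ((lm.2 : ℤ) + 1)) * x ^ (lm.2 + 1) *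
              Complex.exp (Complex.I * ((lm.1 + (lm.2 : ℤ) + 1 : ℤ) : ℂ) * θ) /
            ((lm.1 : ℂ) ^ p * (((lm.2 + 1 : ℕ) : ℂ)) ^ (s : ℂ) *
              (((lm.1 + (lm.2 : ℤ) + 1 : ℤ) : ℂ)) ^ q)
        else 0) -
      2 * ∑ j ∈ range (p + 1), phi ((p - j : ℕ) : ℂ) * eps (p - j) *
        ∑ ξ ∈ range (j + 1),
          (Nat.choose (q - 1 + (j - ξ)) (q - 1) : ℂ) * (-1 : ℂ) ^ (j - ξ) *
            (∑' m : ℕ, (-1 : ℂ) ^ (m + 1) * x ^ (m + 1) *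
                Complex.exp (Complex.I * ((m : ℂ) + 1) * θ) /
              (((m + 1 : ℕ) : ℂ)) ^ ((s : ℂ) + (q : ℂ) + ((j - ξ : ℕ) : ℂ))) *
            (Complex.I * θ) ^ ξ / (Nat.factorial ξ : ℂ) +
      2 * ∑ j ∈ range (q + 1), phi ((q - j : ℕ) : ℂ) * eps (q - j) *
        ∑ ξ ∈ range (j + 1),
          (Nat.choose (p - 1 + (j - ξ)) (p - 1) : ℂ) * (-1 : ℂ) ^ (p - 1) *
            (∑' m : ℕ, x ^ (m + 1) /
              (((m + 1 : ℕ) : ℂ)) ^ ((s : ℂ) + (p : ℂ) + ((j - ξ : ℕ) : ℂ))) *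
            (Complex.I * θ) ^ ξ / (Nat.factorial ξ : ℂ) = 0 := by
  have h := double_polylog_relation_general p q hp hq s (zero_lt_one.trans hs) x hx.le θ hθ
  rw [h.tsum_eq]
  ring
end

section
/- Let p and q be positive integers and let s be a real number with s > 1. Then T(p,s,q;1,1) = 2(−1)^p Σ_{k=0}^{⌊p/2⌋} ζ(2k) C(p+q−1−2k, q−1) ζ(s+p+q−2k) + 2(−1)^p Σ_{k=0}^{⌊q/2⌋} ζ(2k) C(p+q−1−2k, p−1) ζ(s+p+q−2k), where C(n,k) denotes the binomial coefficient. -/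
open Complex Finset

/-- `T(p,s,q;x,y) = Σ_{l ≠ 0, m ≥ 1, l+m ≠ 0} x^l y^m / (l^p m^s (l+m)^q)`. -/
noncomputable def T (p : ℕ) (s : ℂ) (q : ℕ) (x y : ℂ) : ℂ :=
  ∑' lm : ℤ × ℕ,
    if lm.1 ≠ 0 ∧ lm.1 + ((lm.2 : ℤ) + 1) ≠ 0 then
      x ^ lm.1 * y ^ (lm.2 + 1) /
        ((lm.1 : ℂ) ^ p * (((lm.2 + 1 : ℕ) : ℂ)) ^ s *
          (((lm.1 + (lm.2 : ℤ) + 1 : ℤ) : ℂ)) ^ q)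
    else 0

/-!
The inner sum over `l` is treated as a principal value (the limit of sums over symmetric intervals),
because then terms of weight one make sense and the partial fraction identity
`1 / (l ^ (p + 1) * (l + m) ^ (q + 1)) =
  m⁻¹ * (1 / (l ^ (p + 1) * (l + m) ^ q) - 1 / (l ^ p * (l + m) ^ (q + 1)))`
can be iterated, without an exceptional case at `(1, 1)`, until one exponent vanishes. What is left
is a principal value `∑ 1 / l ^ k`, equal to `2 * ζ(k)` for even `k` and to `0` for odd `k`, and a
correction from the excluded pole that `ζ(0) = -1/2` accounts for. On the side of the values, the
recursion is Pascal's rule. For `p, q ≥ 1` everything converges absolutely, so the principal value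
is the sum, and summing its expansion in powers of `m⁻¹` against `m ^ (-s)` gives zeta values.
-/

open Filter SummationFilter Topology

/-- The inner summand `1 / (l ^ p * (l + m) ^ q)` of `T`. The poles `l = 0` and `l = -m` are
excluded even when the corresponding exponent is `0`, which is where the partial fraction recursion
ends. -/
noncomputable def innerTerm (m : ℤ) (p q : ℕ) (l : ℤ) : ℂ :=
  if l ≠ 0 ∧ l + m ≠ 0 then ((l : ℂ) ^ p)⁻¹ * (((l + m : ℤ) : ℂ) ^ q)⁻¹ else 0

/-- The principal value of `∑_{l ≠ 0} l ^ (-k)` for `k ≥ 1`, and its regularisation `2 * ζ(0)`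
for `k = 0`. -/
noncomputable def twoSidedZeta (k : ℕ) : ℂ :=
  if Even k then 2 * riemannZeta k else 0

/-- The weighted sum of `multichoose q j` over `i + j = p`, homogeneous so that it obeys a
Pascal-type recursion in `(p, q)` with factor `t`. -/
def pascalSum {R : Type*} [CommSemiring R] (w : ℕ → R) (t : R) (p q : ℕ) : R :=
  ∑ ij ∈ antidiagonal p, w ij.1 * (Nat.multichoose q ij.2 : R) * t ^ (q + ij.2)

/-- The value of `∑_l innerTerm m p q l` as a polynomial in `t = m⁻¹`. -/
noncomputable def innerSum (t : ℂ) (p q : ℕ) : ℂ :=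
  (-1) ^ p * (pascalSum twoSidedZeta t p q + pascalSum twoSidedZeta t q p)

section PascalSum

variable {R : Type*} [CommSemiring R] (w : ℕ → R) (t : R)

lemma pascalSum_zero_left (q : ℕ) : pascalSum w t 0 q = w 0 * t ^ q := by
  simp [pascalSum]

lemma pascalSum_zero_right (p : ℕ) : pascalSum w t p 0 = w p := by
  cases p with
  | zero => simp [pascalSum]
  | succ p => simp [pascalSum, Nat.sum_antidiagonal_succ', Nat.multichoose_zero_succ]

lemma pascalSum_succ_succ (p q : ℕ) :
    pascalSum w t (p + 1) (q + 1) = t * (pascalSum w t (p + 1) q + pascalSum w t p (q + 1)) := by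
  simp only [pascalSum, Nat.sum_antidiagonal_succ', Nat.multichoose_succ_succ,
    Nat.multichoose_zero_right, Nat.cast_add, mul_add, add_mul, mul_sum, sum_add_distrib]
  ring_nf

end PascalSum

lemma twoSidedZeta_zero : twoSidedZeta 0 = -1 := by
  norm_num [twoSidedZeta, riemannZeta_zero]

lemma neg_one_pow_mul_twoSidedZeta (k : ℕ) : (-1) ^ k * twoSidedZeta k = twoSidedZeta k := by
  unfold twoSidedZeta
  split_ifs with hk
  · rw [hk.neg_one_pow, one_mul]
  · rw [mul_zero]

lemma innerSum_zero_right (t : ℂ) (p : ℕ) : innerSum t p 0 = twoSidedZeta p - (-t) ^ p := by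
  simp only [innerSum, pascalSum_zero_left, pascalSum_zero_right, twoSidedZeta_zero, neg_pow t]
  linear_combination neg_one_pow_mul_twoSidedZeta p

lemma innerSum_zero_left (t : ℂ) (q : ℕ) : innerSum t 0 q = twoSidedZeta q - t ^ q := by
  simp only [innerSum, pascalSum_zero_left, pascalSum_zero_right, twoSidedZeta_zero]
  ring

lemma innerSum_succ_succ (t : ℂ) (p q : ℕ) :
    innerSum t (p + 1) (q + 1) = t * (innerSum t (p + 1) q - innerSum t p (q + 1)) := by
  simp only [innerSum, pascalSum_succ_succ]
  ring

section PrincipalValue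

variable {E : Type*} [AddCommGroup E] [TopologicalSpace E] [IsTopologicalAddGroup E] {f : ℤ → E}

lemma hasSum_symmetricIco_sub_add_one (hf : Tendsto f cofinite (𝓝 0)) :
    HasSum (fun l ↦ f l - f (l + 1)) 0 (symmetricIco ℤ) := by
  rw [hasSum_symmetricIco_int_iff]
  simp only [sum_Ico_int_sub]
  have h_pos : Tendsto (fun N : ℕ ↦ f N) atTop (𝓝 0) :=
    hf.comp (Nat.cofinite_eq_atTop ▸ Nat.cast_injective.tendsto_cofinite)
  have h_neg : Tendsto (fun N : ℕ ↦ f (-N)) atTop (𝓝 0) :=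
    hf.comp (Nat.cofinite_eq_atTop ▸ (neg_injective.comp Nat.cast_injective).tendsto_cofinite)
  simpa only [sub_zero] using h_neg.sub h_pos

lemma hasSum_symmetricIco_sub_add (hf : Tendsto f cofinite (𝓝 0)) (m : ℤ) :
    HasSum (fun l ↦ f l - f (l + m)) 0 (symmetricIco ℤ) := by
  have h_step (k : ℤ) : HasSum (fun l ↦ f (l + k) - f (l + (k + 1))) 0 (symmetricIco ℤ) := by
    simpa only [Function.comp_apply, add_assoc, add_comm (1 : ℤ)] using
      hasSum_symmetricIco_sub_add_one (hf.comp (add_left_injective k).tendsto_cofinite)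
  induction m using Int.induction_on with
  | zero => simp
  | succ k ih => simpa using ih.add (h_step k)
  | pred k ih => simpa using ih.sub (h_step (-k - 1))

lemma hasSum_symmetricIco_of_odd [IsAddTorsionFree E] (hodd : f.Odd)
    (hf : Tendsto f cofinite (𝓝 0)) :
    HasSum f 0 (symmetricIco ℤ) := by
  have h_Icc : HasSum f 0 (symmetricIcc ℤ) := by
    have h_sum (N : ℕ) : ∑ l ∈ Icc (-N : ℤ) N, f l = 0 :=
      hodd.finsetSum_eq_zero (by
        ext l
        simp only [mem_map_equiv, Equiv.neg_symm, Equiv.neg_apply, mem_Icc]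
        omega)
    simpa only [hasSum_symmetricIcc_iff, h_sum] using tendsto_const_nhds
  have h_pos : Tendsto (fun N : ℕ ↦ f N) atTop (𝓝 0) :=
    hf.comp (Nat.cofinite_eq_atTop ▸ Nat.cast_injective.tendsto_cofinite)
  exact h_Icc.hasSum_symmetricIco_of_hasSum_symmetricIcc (by simpa using h_pos.neg)

end PrincipalValue

lemma tendsto_inv_intCast_pow_cofinite {k : ℕ} (hk : k ≠ 0) :
    Tendsto (fun l : ℤ ↦ ((l : ℂ) ^ k)⁻¹) cofinite (𝓝 0) := by
  rw [Int.cofinite_eq]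
  exact tendsto_inv₀_cobounded.comp
    ((tendsto_pow_cobounded_cobounded hk).comp tendsto_intCast_atBot_sup_atTop_cobounded)

lemma summable_inv_intCast_sq : Summable fun l : ℤ ↦ ((l : ℝ) ^ 2)⁻¹ := by
  simpa only [one_div] using Real.summable_one_div_int_pow.mpr one_lt_two

lemma summable_inv_intCast_pow {k : ℕ} (hk : 1 < k) : Summable fun l : ℤ ↦ ((l : ℂ) ^ k)⁻¹ := by
  refine .of_norm ((Real.summable_one_div_int_pow.mpr hk).abs.congr fun l ↦ ?_)
  simp

lemma hasSum_inv_intCast_pow {k : ℕ} (hk : k ≠ 0) :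
    HasSum (fun l : ℤ ↦ ((l : ℂ) ^ k)⁻¹) (twoSidedZeta k) (symmetricIco ℤ) := by
  unfold twoSidedZeta
  split_ifs with heven
  · have hk2 : 2 ≤ k := by grind
    rw [two_mul_riemannZeta_eq_tsum_int_inv_pow_of_even hk2 heven]
    exact (summable_inv_intCast_pow hk2).hasSum.mono_left (symmetricIco ℤ).le_atTop
  · refine hasSum_symmetricIco_of_odd (fun l ↦ ?_) (tendsto_inv_intCast_pow_cofinite hk)
    rw [Int.cast_neg, (Nat.not_even_iff_odd.mp heven).neg_pow, inv_neg]

lemma innerTerm_zero_right (m : ℤ) {p : ℕ} (hp : p ≠ 0) (l : ℤ) :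
    innerTerm m p 0 l = ((l : ℂ) ^ p)⁻¹ - if l = -m then (-(m : ℂ)⁻¹) ^ p else 0 := by
  rcases eq_or_ne l 0 with rfl | hl
  · rcases eq_or_ne m 0 with rfl | hm
    · simp [innerTerm, hp]
    · simp [innerTerm, hp, hm]
  rcases eq_or_ne l (-m) with rfl | hlm
  · simp [innerTerm, ← inv_neg]
  · simp [innerTerm, hl, hlm, ← eq_neg_iff_add_eq_zero]

lemma innerTerm_zero_left (m : ℤ) {q : ℕ} (hq : q ≠ 0) (l : ℤ) :
    innerTerm m 0 q l = (((l + m : ℤ) : ℂ) ^ q)⁻¹ - if l = 0 then (m : ℂ)⁻¹ ^ q else 0 := by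
  rcases eq_or_ne l 0 with rfl | hl
  · simp [innerTerm]
  rcases eq_or_ne (l + m) 0 with hlm | hlm
  · simp [innerTerm, hl, hlm, hq]
  · simp [innerTerm, hl, hlm]

lemma innerTerm_succ_succ {m : ℤ} (hm : m ≠ 0) (p q : ℕ) (l : ℤ) :
    innerTerm m (p + 1) (q + 1) l =
      (m : ℂ)⁻¹ * (innerTerm m (p + 1) q l - innerTerm m p (q + 1) l) := by
  unfold innerTerm
  split_ifs with h
  · have hl : (l : ℂ) ≠ 0 := mod_cast h.1
    have hlm : (l + m : ℂ) ≠ 0 := mod_cast h.2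
    have hm' : (m : ℂ) ≠ 0 := mod_cast hm
    push_cast
    field_simp
    ring
  · simp

lemma hasSum_innerTerm_symmetricIco {m : ℤ} (hm : m ≠ 0) (p q : ℕ) (hpq : p + q ≠ 0) :
    HasSum (innerTerm m p q) (innerSum (m : ℂ)⁻¹ p q) (symmetricIco ℤ) := by
  induction p generalizing q with
  | zero =>
    have hq : q ≠ 0 := by omega
    have h_shift : HasSum (fun l : ℤ ↦ (((l + m : ℤ) : ℂ) ^ q)⁻¹) (twoSidedZeta q)
        (symmetricIco ℤ) := by
      simpa using (hasSum_inv_intCast_pow hq).sub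
        (hasSum_symmetricIco_sub_add (tendsto_inv_intCast_pow_cofinite hq) m)
    rw [innerSum_zero_left]
    exact (h_shift.sub (hasSum_ite_eq 0 _ _)).congr_fun (innerTerm_zero_left m hq)
  | succ p ihp =>
    induction q with
    | zero =>
      rw [innerSum_zero_right]
      exact ((hasSum_inv_intCast_pow p.succ_ne_zero).sub (hasSum_ite_eq (-m) _ _)).congr_fun
        (innerTerm_zero_right m p.succ_ne_zero)
    | succ q ihq =>
      rw [innerSum_succ_succ]
      exact (((ihq (by omega)).sub (ihp (q + 1) (by omega))).mul_left _).congr_fun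
        (innerTerm_succ_succ hm p q)

lemma norm_inv_intCast_pow_le {k : ℕ} (hk : k ≠ 0) (l : ℤ) : ‖((l : ℂ) ^ k)⁻¹‖ ≤ |(l : ℝ)|⁻¹ := by
  rcases eq_or_ne l 0 with rfl | hl
  · simp [hk]
  · have h_one : 1 ≤ |(l : ℝ)| := mod_cast Int.one_le_abs hl
    rw [norm_inv, norm_pow, norm_intCast]
    exact inv_anti₀ (by positivity) (le_self_pow₀ h_one hk)

lemma norm_innerTerm_le (m : ℤ) {p q : ℕ} (hp : p ≠ 0) (hq : q ≠ 0) (l : ℤ) :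
    ‖innerTerm m p q l‖ ≤ ((l : ℝ) ^ 2)⁻¹ + (((l + m : ℤ) : ℝ) ^ 2)⁻¹ := by
  unfold innerTerm
  split_ifs with h
  · calc ‖((l : ℂ) ^ p)⁻¹ * (((l + m : ℤ) : ℂ) ^ q)⁻¹‖
        ≤ |(l : ℝ)|⁻¹ * |((l + m : ℤ) : ℝ)|⁻¹ := by
          rw [norm_mul]
          gcongr <;> exact norm_inv_intCast_pow_le ‹_› _
      _ ≤ |(l : ℝ)|⁻¹ ^ 2 + |((l + m : ℤ) : ℝ)|⁻¹ ^ 2 := by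
          nlinarith [two_mul_le_add_sq |(l : ℝ)|⁻¹ |((l + m : ℤ) : ℝ)|⁻¹,
            sq_nonneg |(l : ℝ)|⁻¹, sq_nonneg |((l + m : ℤ) : ℝ)|⁻¹]
      _ = ((l : ℝ) ^ 2)⁻¹ + (((l + m : ℤ) : ℝ) ^ 2)⁻¹ := by
          simp only [inv_pow, sq_abs]
  · rw [norm_zero]
    positivity

lemma summable_innerTerm (m : ℤ) {p q : ℕ} (hp : p ≠ 0) (hq : q ≠ 0) :
    Summable (innerTerm m p q) :=
  .of_norm_bounded (summable_inv_intCast_sq.add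
    ((Equiv.addRight m).summable_iff.mpr summable_inv_intCast_sq)) (norm_innerTerm_le m hp hq)

lemma tsum_innerTerm {m : ℤ} (hm : m ≠ 0) {p q : ℕ} (hp : p ≠ 0) (hq : q ≠ 0) :
    ∑' l, innerTerm m p q l = innerSum (m : ℂ)⁻¹ p q :=
  HasSum.unique ((summable_innerTerm m hp hq).hasSum.mono_left (symmetricIco ℤ).le_atTop)
    (hasSum_innerTerm_symmetricIco hm p q (by omega))

lemma hasSum_riemannZeta {s : ℂ} (hs : 1 < s.re) :
    HasSum (fun n : ℕ ↦ (((n + 1 : ℕ) : ℂ) ^ s)⁻¹) (riemannZeta s) := by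
  have h_summable : Summable fun n : ℕ ↦ (((n + 1 : ℕ) : ℂ) ^ s)⁻¹ := by
    simpa only [one_div] using (summable_nat_add_iff 1).mpr (summable_one_div_nat_cpow.mpr hs)
  simpa [zeta_eq_tsum_one_div_nat_add_one_cpow hs] using h_summable.hasSum

lemma hasSum_cpow_inv_mul_pascalSum (w : ℕ → ℂ) (p q : ℕ) {s : ℂ} (hs : 1 < s.re) :
    HasSum (fun n : ℕ ↦ (((n + 1 : ℕ) : ℂ) ^ s)⁻¹ * pascalSum w ((n + 1 : ℕ) : ℂ)⁻¹ p q)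
      (∑ ij ∈ antidiagonal p,
        w ij.1 * (Nat.multichoose q ij.2 : ℂ) * riemannZeta (s + (q + ij.2 : ℕ))) := by
  have h_term (j : ℕ) : 1 < (s + (q + j : ℕ)).re := by
    rw [add_re, natCast_re]
    exact hs.trans_le (le_add_of_nonneg_right (Nat.cast_nonneg _))
  refine (hasSum_sum fun ij _ ↦ (hasSum_riemannZeta (h_term ij.2)).mul_left _).congr_fun fun n ↦ ?_
  rw [pascalSum, mul_sum]
  refine sum_congr rfl fun ij _ ↦ ?_
  rw [cpow_add _ _ (Nat.cast_ne_zero.mpr n.succ_ne_zero), cpow_natCast, mul_inv, inv_pow]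
  ring

lemma summable_mul_comp_add {ι G : Type*} [AddGroup G] {f : ι → ℝ} {g : G → ℝ} (hf : Summable f)
    (hg : Summable g) (hf_nonneg : 0 ≤ f) (hg_nonneg : 0 ≤ g) (c : ι → G) :
    Summable fun x : ι × G ↦ f x.1 * g (x.2 + c x.1) :=
  (Equiv.prodShear (Equiv.refl ι) fun i ↦ Equiv.addRight (c i)).summable_iff.mpr
    (hf.mul_of_nonneg hg hf_nonneg hg_nonneg)

lemma summable_cpow_inv_mul_innerTerm {p q : ℕ} (hp : p ≠ 0) (hq : q ≠ 0) {s : ℂ}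
    (hs : 1 < s.re) :
    Summable fun x : ℕ × ℤ ↦ (((x.1 + 1 : ℕ) : ℂ) ^ s)⁻¹ * innerTerm (x.1 + 1 : ℕ) p q x.2 := by
  have h_shifted (c : ℕ → ℤ) : Summable fun x : ℕ × ℤ ↦
      ‖(((x.1 + 1 : ℕ) : ℂ) ^ s)⁻¹‖ * (((x.2 + c x.1 : ℤ) : ℝ) ^ 2)⁻¹ :=
    summable_mul_comp_add (hasSum_riemannZeta hs).summable.norm summable_inv_intCast_sq
      (fun _ ↦ norm_nonneg _) (fun _ ↦ inv_nonneg.mpr (sq_nonneg _)) c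
  refine .of_norm_bounded ((h_shifted 0).add (h_shifted fun n ↦ (n + 1 : ℕ))) fun x ↦ ?_
  rw [norm_mul, ← mul_add, Pi.zero_apply, add_zero]
  exact mul_le_mul_of_nonneg_left (norm_innerTerm_le _ hp hq _) (norm_nonneg _)

lemma T_one_one_eq_tsum_prod (p : ℕ) (s : ℂ) (q : ℕ) :
    T p s q 1 1 =
      ∑' x : ℕ × ℤ, (((x.1 + 1 : ℕ) : ℂ) ^ s)⁻¹ * innerTerm (x.1 + 1 : ℕ) p q x.2 := by
  rw [T, ← (Equiv.prodComm ℕ ℤ).tsum_eq]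
  refine tsum_congr fun x ↦ ?_
  simp only [innerTerm, Equiv.prodComm_apply, Prod.fst_swap, Prod.snd_swap, mul_ite, mul_zero]
  push_cast
  refine if_congr Iff.rfl ?_ rfl
  simp only [one_zpow, one_pow, mul_one, one_div, mul_inv, add_assoc]
  ring

lemma T_one_one_eq_tsum_innerSum {p q : ℕ} (hp : p ≠ 0) (hq : q ≠ 0) {s : ℂ} (hs : 1 < s.re) :
    T p s q 1 1 = ∑' n : ℕ, (((n + 1 : ℕ) : ℂ) ^ s)⁻¹ * innerSum ((n + 1 : ℕ) : ℂ)⁻¹ p q := by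
  rw [T_one_one_eq_tsum_prod, (summable_cpow_inv_mul_innerTerm hp hq hs).tsum_prod]
  refine tsum_congr fun n ↦ ?_
  simp only [tsum_mul_left]
  rw [tsum_innerTerm (mod_cast n.succ_ne_zero) hp hq, Int.cast_natCast]

lemma sum_antidiagonal_ite_even {M : Type*} [AddCommMonoid M] (f : ℕ → ℕ → M) (p : ℕ) :
    ∑ ij ∈ antidiagonal p, (if Even ij.1 then f ij.1 ij.2 else 0) =
      ∑ k ∈ range (p / 2 + 1), f (2 * k) (p - 2 * k) := by
  rw [← sum_filter]
  symm
  refine sum_nbij' (fun k ↦ (2 * k, p - 2 * k)) (fun ij ↦ ij.1 / 2) ?_ ?_ ?_ ?_ ?_ <;>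
    grind [HasAntidiagonal.mem_antidiagonal]

lemma multichoose_eq_choose_sub_one {q : ℕ} (hq : q ≠ 0) (j : ℕ) :
    Nat.multichoose q j = (q + j - 1).choose (q - 1) := by
  rw [Nat.multichoose_eq]
  exact Nat.choose_symm_of_eq_add (by omega)

lemma sum_antidiagonal_twoSidedZeta_mul (p : ℕ) {q : ℕ} (hq : q ≠ 0) (s : ℂ) :
    ∑ ij ∈ antidiagonal p,
        twoSidedZeta ij.1 * (Nat.multichoose q ij.2 : ℂ) * riemannZeta (s + (q + ij.2 : ℕ)) =
      2 * ∑ k ∈ range (p / 2 + 1), riemannZeta (2 * k) *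
        (Nat.choose (p + q - 1 - 2 * k) (q - 1) : ℂ) * riemannZeta (s + p + q - 2 * k) := by
  simp only [twoSidedZeta, ite_mul, zero_mul]
  rw [sum_antidiagonal_ite_even
    (fun i j ↦ 2 * riemannZeta i * (Nat.multichoose q j : ℂ) * riemannZeta (s + (q + j : ℕ))),
    mul_sum]
  refine sum_congr rfl fun k hk ↦ ?_
  have hkp : 2 * k ≤ p := by grind
  have h_top : q + (p - 2 * k) - 1 = p + q - 1 - 2 * k := by omega
  have h_arg : s + (q + (p - 2 * k) : ℕ) = s + p + q - 2 * k := by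
    push_cast [hkp]
    ring
  rw [multichoose_eq_choose_sub_one hq, h_top, h_arg]
  push_cast
  ring

lemma hasSum_cpow_inv_mul_pascalSum_twoSidedZeta (p : ℕ) {q : ℕ} (hq : q ≠ 0) {s : ℂ}
    (hs : 1 < s.re) :
    HasSum (fun n : ℕ ↦ (((n + 1 : ℕ) : ℂ) ^ s)⁻¹ *
        pascalSum twoSidedZeta ((n + 1 : ℕ) : ℂ)⁻¹ p q)
      (2 * ∑ k ∈ range (p / 2 + 1), riemannZeta (2 * k) *
        (Nat.choose (p + q - 1 - 2 * k) (q - 1) : ℂ) * riemannZeta (s + p + q - 2 * k)) := by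
  rw [← sum_antidiagonal_twoSidedZeta_mul p hq]
  exact hasSum_cpow_inv_mul_pascalSum twoSidedZeta p q hs

theorem T_eval_one_one_general (p q : ℕ) (hp : 0 < p) (hq : 0 < q) (s : ℂ) (hs : 1 < s.re) :
    T p s q 1 1 =
      2 * (-1 : ℂ) ^ p * ∑ k ∈ range (p / 2 + 1), riemannZeta (2 * k) *
          (Nat.choose (p + q - 1 - 2 * k) (q - 1) : ℂ) *
          riemannZeta (s + p + q - 2 * k) +
      2 * (-1 : ℂ) ^ p * ∑ k ∈ range (q / 2 + 1), riemannZeta (2 * k) *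
          (Nat.choose (p + q - 1 - 2 * k) (p - 1) : ℂ) *
          riemannZeta (s + p + q - 2 * k) := by
  have h_pq := hasSum_cpow_inv_mul_pascalSum_twoSidedZeta p hq.ne' hs
  have h_qp := hasSum_cpow_inv_mul_pascalSum_twoSidedZeta q hp.ne' hs
  rw [add_comm q p, add_right_comm s (q : ℂ)] at h_qp
  have h_outer := ((h_pq.add h_qp).mul_left ((-1) ^ p)).congr_fun
    (g := fun n : ℕ ↦ (((n + 1 : ℕ) : ℂ) ^ s)⁻¹ * innerSum ((n + 1 : ℕ) : ℂ)⁻¹ p q)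
    fun n ↦ by rw [innerSum]; ring
  rw [T_one_one_eq_tsum_innerSum hp.ne' hq.ne' hs, h_outer.tsum_eq]
  ring

/-- Evaluation of `T(p,s,q;1,1)` in terms of the Riemann zeta function
(Corollary 3.4, first formula, of Komori–Matsumoto–Tsumura). -/
theorem T_eval_one_one (p q : ℕ) (hp : 0 < p) (hq : 0 < q) (s : ℝ) (hs : 1 < s) :
    T p (s : ℂ) q 1 1 =
      2 * (-1 : ℂ) ^ p * ∑ k ∈ range (p / 2 + 1), riemannZeta (2 * k) *
          (Nat.choose (p + q - 1 - 2 * k) (q - 1) : ℂ) *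
          riemannZeta ((s : ℂ) + p + q - 2 * k) +
      2 * (-1 : ℂ) ^ p * ∑ k ∈ range (q / 2 + 1), riemannZeta (2 * k) *
          (Nat.choose (p + q - 1 - 2 * k) (p - 1) : ℂ) *
          riemannZeta ((s : ℂ) + p + q - 2 * k) :=
  T_eval_one_one_general p q hp hq s (by simpa using hs)
end

section
/- Let p be a positive integer and let h : ℕ₀ → ℂ be any function. Then Σ_{j=0}^{p} φ(p−j) ε_{p−j} Σ_{ξ=0}^{j} h(j−ξ) (−iπ/2)^ξ/ξ! = (1/2) Σ_{ξ=0}^{p} Λ(ξ;i) h(p−ξ), and Σ_{j=0}^{p} φ(p−j) ε_{p−j} Σ_{ξ=0}^{j} h(j−ξ) (iπ/2)^ξ/ξ! = (1/2) Σ_{ξ=0}^{p} Λ(ξ;−i) h(p−ξ). -/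
open Complex Finset Real

/-- The primitive Dirichlet character of conductor 4 with values in `ℂ`. -/
noncomputable def chi4 : DirichletCharacter ℂ 4 := ZMod.χ₄.ringHomComp (Int.castRingHom ℂ)

/-- `L(s,χ₄)`, equal to `Σ_{m ≥ 0} (-1)^m (2m+1)^{-s}` at the relevant arguments. -/
noncomputable def Lchi4 (s : ℂ) : ℂ := DirichletCharacter.LFunction chi4 s

/-- `Λ(ξ;i)`: equal to `2^{1-ξ}(2^{1-ξ}-1)ζ(ξ)` for even `ξ`, and to
`2i L(ξ,χ₄)` for odd `ξ`. -/
noncomputable def LamI (ξ : ℕ) : ℂ :=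
  if Even ξ then (2 : ℂ) ^ ((1 : ℤ) - ξ) * ((2 : ℂ) ^ ((1 : ℤ) - ξ) - 1) * riemannZeta ξ
  else 2 * Complex.I * Lchi4 ξ

/-- `Λ(ξ;-i)`: equal to `2^{1-ξ}(2^{1-ξ}-1)ζ(ξ)` for even `ξ`, and to
`-2i L(ξ,χ₄)` for odd `ξ`. -/
noncomputable def LamNegI (ξ : ℕ) : ℂ :=
  if Even ξ then (2 : ℂ) ^ ((1 : ℤ) - ξ) * ((2 : ℂ) ^ ((1 : ℤ) - ξ) - 1) * riemannZeta ξ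
  else -(2 * Complex.I * Lchi4 ξ)

/-!
Up to the factor `-1/2` or `-1`, all of `φ(m) ε_m`, `Λ(m;i)` and `Λ(m;-i)` are values of the
normalized Bernoulli polynomial `b_m(x) = (2πi)^m B_m(x) / m!`, at `x = 1/2`, `1/4` and `3/4`
respectively. Since `∑ b_m(x) t^m` depends on `x` only through the factor `e^{2πixt}`, one has
`b_n(x + y) = ∑_k b_{n-k}(x) (2πiy)^k / k!`. Convolving with `h`, the two identities are the
passage from `x = 1/2` to `x + y` with `y = ∓1/4`.
-/

section BernoulliGeneratingFunction

open PowerSeries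

variable {A : Type*} [CommRing A] [Algebra ℚ A]

lemma mul_exp_sub_one_injective :
    Function.Injective fun f : PowerSeries A => f * (PowerSeries.exp A - 1) := by
  have hfactor : PowerSeries.exp A - 1 =
      X * PowerSeries.mk fun n => coeff (n + 1) (PowerSeries.exp A) := by
    simpa using sub_const_eq_X_mul_shift (PowerSeries.exp A)
  have hunit : IsUnit (PowerSeries.mk fun n => coeff (n + 1) (PowerSeries.exp A)) := by
    simp [isUnit_iff_constantCoeff]
  intro f g hfg
  simp only [hfactor, mul_left_comm _ X] at hfg
  exact hunit.mul_left_injective (X_mul_cancel hfg)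

lemma bernoulli_generating_function_add (x y : A) :
    (PowerSeries.mk fun n =>
        Polynomial.aeval (x + y) ((1 / n.factorial : ℚ) • Polynomial.bernoulli n)) =
      (PowerSeries.mk fun n =>
        Polynomial.aeval x ((1 / n.factorial : ℚ) • Polynomial.bernoulli n)) *
        rescale y (PowerSeries.exp A) := by
  apply mul_exp_sub_one_injective
  dsimp only
  rw [Polynomial.bernoulli_generating_function, mul_right_comm,
    Polynomial.bernoulli_generating_function, mul_assoc, exp_mul_exp_eq_exp_add]

end BernoulliGeneratingFunction

/-- The normalized Bernoulli polynomial `(2πi)ⁿ Bₙ(x) / n!`, i.e. the coefficient of `tⁿ` in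
`2πit e^{2πixt} / (e^{2πit} - 1)`. -/
noncomputable def scaledBernoulli (n : ℕ) (x : ℂ) : ℂ :=
  (2 * π * I) ^ n / n.factorial * Polynomial.aeval x (Polynomial.bernoulli n)

lemma aeval_ofReal_bernoulli (n : ℕ) (x : ℝ) :
    Polynomial.aeval (x : ℂ) (Polynomial.bernoulli n) = bernoulliFun n x := by
  rw [bernoulliFun, Polynomial.eval_map_algebraMap]
  exact Polynomial.aeval_algebraMap_apply ℂ x (Polynomial.bernoulli n)

lemma scaledBernoulli_zero_right (n : ℕ) :
    scaledBernoulli n 0 = (2 * π * I) ^ n / n.factorial * bernoulli n := by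
  have h := aeval_ofReal_bernoulli n 0
  rw [ofReal_zero, bernoulliFun_eval_zero, ofReal_ratCast] at h
  rw [scaledBernoulli, h]

lemma scaledBernoulli_one_sub (n : ℕ) (x : ℂ) :
    scaledBernoulli n (1 - x) = (-1) ^ n * scaledBernoulli n x := by
  have h := congrArg (Polynomial.aeval x) (Polynomial.bernoulli_comp_one_sub_X n)
  simp only [Polynomial.aeval_comp, map_sub, map_one, Polynomial.aeval_X, map_mul, map_pow,
    map_neg] at h
  rw [scaledBernoulli, scaledBernoulli, h]
  ring

lemma scaledBernoulli_two_mul (n : ℕ) (x : ℝ) :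
    scaledBernoulli n (2 * x) =
      2 ^ n / 2 * (scaledBernoulli n x + scaledBernoulli n (x + 1 / 2)) := by
  have h := congrArg ((↑) : ℝ → ℂ) (bernoulliFun_mul n two_ne_zero x)
  simp only [sum_range_succ, range_zero, sum_empty] at h
  push_cast [← aeval_ofReal_bernoulli] at h
  simp only [zero_div, add_zero, zero_add] at h
  rw [scaledBernoulli, h, scaledBernoulli, scaledBernoulli]
  ring

lemma scaledBernoulli_half (n : ℕ) :
    scaledBernoulli n (1 / 2) = (2 / 2 ^ n - 1) * scaledBernoulli n 0 := by
  have h := scaledBernoulli_two_mul n 0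
  simp only [ofReal_zero, mul_zero, zero_add] at h
  field_simp at h ⊢
  linear_combination -h

lemma scaledBernoulli_half_of_odd {n : ℕ} (hn : Odd n) : scaledBernoulli n (1 / 2) = 0 := by
  have h := scaledBernoulli_one_sub n (1 / 2)
  rw [sub_half, hn.neg_one_pow] at h
  linear_combination h / 2

lemma scaledBernoulli_quarter_of_even {n : ℕ} (hn : Even n) :
    scaledBernoulli n (1 / 4) = (2 / 2 ^ n - 1) / 2 ^ n * scaledBernoulli n 0 := by
  have hrefl : scaledBernoulli n (3 / 4) = scaledBernoulli n (1 / 4) := by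
    rw [show (3 / 4 : ℂ) = 1 - 1 / 4 by norm_num, scaledBernoulli_one_sub, hn.neg_one_pow,
      one_mul]
  have hdup : scaledBernoulli n (1 / 2) =
      2 ^ n / 2 * (scaledBernoulli n (1 / 4) + scaledBernoulli n (3 / 4)) := by
    convert scaledBernoulli_two_mul n (1 / 4) using 4 <;> norm_num
  rw [hrefl, scaledBernoulli_half] at hdup
  field_simp at hdup ⊢
  linear_combination -hdup / 2

lemma scaledBernoulli_add (n : ℕ) (x y : ℂ) :
    scaledBernoulli n (x + y) =
      ∑ k ∈ range (n + 1), scaledBernoulli (n - k) x * ((2 * π * I * y) ^ k / k.factorial) := by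
  have h := congrArg (PowerSeries.coeff n) (bernoulli_generating_function_add x y)
  rw [mul_comm, PowerSeries.coeff_mul, Nat.sum_antidiagonal_eq_sum_range_succ_mk] at h
  simp only [PowerSeries.coeff_mk, PowerSeries.coeff_rescale, PowerSeries.coeff_exp,
    Algebra.smul_def, map_mul, one_div, Polynomial.algebraMap_eq, Polynomial.aeval_C, map_inv₀,
    map_natCast] at h
  rw [scaledBernoulli, div_mul_eq_mul_div, mul_div_assoc, div_eq_inv_mul, h, mul_sum]
  refine sum_congr rfl fun k hk => ?_
  rw [scaledBernoulli, ← pow_sub_mul_pow (2 * π * I) (mem_range_succ_iff.1 hk), mul_pow _ y]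
  ring

lemma riemannZeta_eq_scaledBernoulli_of_even {n : ℕ} (hn : Even n) :
    riemannZeta n = -scaledBernoulli n 0 / 2 := by
  obtain ⟨k, rfl⟩ := hn.two_dvd
  rw [scaledBernoulli_zero_right, Nat.cast_mul, Nat.cast_ofNat, riemannZeta_two_mul_nat',
    zpow_sub₀ two_ne_zero, mul_pow, mul_pow, pow_mul I, I_sq]
  norm_cast
  push_cast
  ring

lemma phi_mul_eps (m : ℕ) : phi m * eps m = -scaledBernoulli m (1 / 2) / 2 := by
  rcases m.even_or_odd with hm | hm
  · have hm1 : (m : ℂ) ≠ 1 := by rintro h; norm_cast at h; simp [h] at hm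
    rw [phi, if_neg hm1, eps, hm.neg_one_pow, riemannZeta_eq_scaledBernoulli_of_even hm,
      scaledBernoulli_half, cpow_sub _ _ two_ne_zero, cpow_one, cpow_natCast]
    ring
  · rw [eps, hm.neg_one_pow, scaledBernoulli_half_of_odd hm]
    simp

section AlternatingSeries

open Filter Topology

lemma tendsto_alternating_limit_of_antitone {ι E : Type*} [Ring E] [LinearOrder E]
    [IsOrderedRing E] [TopologicalSpace E] [OrderTopology E] [IsTopologicalRing E] {l : Filter ι}
    {f : ι → ℕ → E} {F : ι → E} {g : ℕ → E} {a : E} (hf : ∀ᶠ i in l, Antitone (f i))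
    (hF : ∀ᶠ i in l, Tendsto (fun n => ∑ k ∈ range n, (-1) ^ k * f i k) atTop (𝓝 (F i)))
    (hfg : ∀ k, Tendsto (f · k) l (𝓝 (g k)))
    (hg : Tendsto (fun n => ∑ k ∈ range n, (-1) ^ k * g k) atTop (𝓝 a)) :
    Tendsto F l (𝓝 a) := by
  have hpartial (n : ℕ) : Tendsto (fun i => ∑ k ∈ range n, (-1) ^ k * f i k) l
      (𝓝 (∑ k ∈ range n, (-1) ^ k * g k)) :=
    tendsto_finsetSum _ fun k _ => (hfg k).const_mul _
  have heven : Tendsto (fun n : ℕ => 2 * n) atTop atTop :=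
    tendsto_atTop_mono (fun n => show n ≤ 2 * n by lia) tendsto_id
  have hodd : Tendsto (fun n : ℕ => 2 * n + 1) atTop atTop :=
    tendsto_atTop_mono (fun n => show n ≤ 2 * n + 1 by lia) tendsto_id
  refine tendsto_order.2 ⟨fun b hb => ?_, fun b hb => ?_⟩
  · obtain ⟨n, hn⟩ := ((hg.comp heven).eventually (lt_mem_nhds hb)).exists
    filter_upwards [hf, hF, (hpartial (2 * n)).eventually (lt_mem_nhds hn)] with i hfi hFi hbi
    exact hbi.trans_le (hfi.alternating_series_le_tendsto hFi n)
  · obtain ⟨n, hn⟩ := ((hg.comp hodd).eventually (gt_mem_nhds hb)).exists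
    filter_upwards [hf, hF, (hpartial (2 * n + 1)).eventually (gt_mem_nhds hn)] with i hfi hFi hbi
    exact (hfi.tendsto_le_alternating_series hFi n).trans_lt hbi

end AlternatingSeries

section QuarterSineZeta

open HurwitzZeta Filter Topology

lemma sinZeta_two_mul_add_one_eq_scaledBernoulli {k : ℕ} (hk : k ≠ 0) {x : ℝ}
    (hx : x ∈ Set.Icc 0 1) :
    sinZeta x (2 * k + 1) = I / 2 * scaledBernoulli (2 * k + 1) x := by
  rw [sinZeta_two_mul_nat_add_one hk hx, Polynomial.eval_map_algebraMap, scaledBernoulli,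
    mul_pow _ I, pow_succ I, pow_mul I, I_sq]
  linear_combination -((-1) ^ k * (2 * π) ^ (2 * k + 1) / 2 / (2 * k + 1).factorial *
    Polynomial.aeval (x : ℂ) (Polynomial.bernoulli (2 * k + 1))) * I_sq

lemma sin_two_pi_mul_quarter_mul_odd (k : ℕ) :
    Real.sin (2 * π * (1 / 4 : ℝ) * (2 * k + 1 : ℕ)) = (-1) ^ k := by
  rw [show 2 * π * (1 / 4 : ℝ) * (2 * k + 1 : ℕ) = π / 2 + k * π by push_cast; ring,
    Real.sin_add_nat_mul_pi, Real.sin_pi_div_two, mul_one]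

lemma hasSum_sinZeta_quarter {s : ℝ} (hs : 1 < s) :
    HasSum (fun k : ℕ => (((-1) ^ k * (1 / (2 * k + 1 : ℝ) ^ s) : ℝ) : ℂ))
      (sinZeta (1 / 4 : ℝ) s) := by
  have hodd : Function.Injective fun k : ℕ => 2 * k + 1 := fun a b h => by simpa using h
  have hsum := hasSum_nat_sinZeta (1 / 4) (s := s) (by simpa using hs)
  rw [← hodd.hasSum_iff] at hsum
  · refine hsum.congr_fun fun k => ?_
    simp only [Function.comp_apply, sin_two_pi_mul_quarter_mul_odd]
    push_cast [Complex.ofReal_cpow (show (0 : ℝ) ≤ 2 * k + 1 by positivity)]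
    ring
  · intro n hn
    obtain ⟨k, rfl⟩ : Even n := by
      by_contra h
      obtain ⟨k, rfl⟩ := Nat.not_even_iff_odd.1 h
      exact hn ⟨k, rfl⟩
    rw [show 2 * π * (1 / 4 : ℝ) * (k + k : ℕ) = k * π by push_cast; ring, Real.sin_nat_mul_pi]
    simp

/- The Dirichlet series of `sinZeta` converges only conditionally at `s = 1`, so the value is
obtained by letting `s ↓ 1` in the alternating series and comparing with the Leibniz series. -/
lemma sinZeta_quarter_one : sinZeta (1 / 4 : ℝ) 1 = π / 4 := by
  have hreal : Tendsto (fun s : ℝ => ∑' k : ℕ, (-1) ^ k * (1 / (2 * k + 1 : ℝ) ^ s))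
      (𝓝[>] 1) (𝓝 (π / 4)) := by
    refine tendsto_alternating_limit_of_antitone (f := fun s k => 1 / (2 * k + 1 : ℝ) ^ s)
      (g := fun k => 1 / (2 * k + 1 : ℝ)) ?_ ?_ (fun k => ?_) ?_
    · filter_upwards [self_mem_nhdsWithin] with s (hs : 1 < s) a b hab
      dsimp only
      gcongr
    · filter_upwards [self_mem_nhdsWithin] with s hs
      exact (Complex.summable_ofReal.1 (hasSum_sinZeta_quarter hs).summable).hasSum.tendsto_sum_nat
    · have hcont : Continuous fun s : ℝ => 1 / (2 * k + 1 : ℝ) ^ s :=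
        continuous_const.div (Real.continuous_const_rpow (by positivity)) fun s => by positivity
      simpa using (hcont.tendsto 1).mono_left nhdsWithin_le_nhds
    · simpa [div_eq_mul_inv] using Real.tendsto_sum_pi_div_four
  have hcomplex : Tendsto (fun s : ℝ => sinZeta (1 / 4 : ℝ) s) (𝓝[>] 1)
      (𝓝 (sinZeta (1 / 4 : ℝ) (1 : ℝ))) :=
    (((differentiableAt_sinZeta _).continuous.comp continuous_ofReal).tendsto 1).mono_left
      nhdsWithin_le_nhds
  have heq : (fun s : ℝ => sinZeta (1 / 4 : ℝ) s) =ᶠ[𝓝[>] 1]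
      fun s => ((∑' k : ℕ, (-1) ^ k * (1 / (2 * k + 1 : ℝ) ^ s) : ℝ) : ℂ) := by
    filter_upwards [self_mem_nhdsWithin] with s hs
    rw [ofReal_tsum, (hasSum_sinZeta_quarter hs).tsum_eq]
  simpa using tendsto_nhds_unique (hcomplex.congr' heq)
    ((continuous_ofReal.tendsto _).comp hreal)

lemma sinZeta_quarter_of_odd {n : ℕ} (hn : Odd n) :
    sinZeta (1 / 4 : ℝ) n = I / 2 * scaledBernoulli n (1 / 4) := by
  obtain ⟨k, rfl⟩ := hn
  rcases eq_or_ne k 0 with rfl | hk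
  · rw [mul_zero, zero_add, Nat.cast_one, sinZeta_quarter_one, scaledBernoulli,
      Polynomial.bernoulli_one]
    simp only [pow_one, Nat.factorial_one, Nat.cast_one, div_one, map_sub, Polynomial.aeval_X,
      Polynomial.aeval_C, map_inv₀, map_ofNat]
    linear_combination (π / 4) * I_sq
  · simpa using sinZeta_two_mul_add_one_eq_scaledBernoulli hk (x := 1 / 4) (by norm_num)

lemma chi4_eq_stdAddChar_sub (j : ZMod 4) :
    chi4 j = (ZMod.stdAddChar j - ZMod.stdAddChar (-j)) / (2 * I) := by
  have hone : ZMod.stdAddChar (1 : ZMod 4) = I := by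
    have h := ZMod.stdAddChar_coe (N := 4) 1
    rwa [show 2 * π * I * (1 : ℤ) / (4 : ℕ) = π / 2 * I by push_cast; ring,
      exp_pi_div_two_mul_I, Int.cast_one] at h
  have hpow (k : ℕ) : ZMod.stdAddChar (k : ZMod 4) = I ^ k := by
    rw [← hone, ← AddChar.map_nsmul_eq_pow, nsmul_one]
  have hthree : ZMod.stdAddChar (3 : ZMod 4) = -I := (hpow 3).trans I_pow_three
  change ((ZMod.χ₄ j : ℤ) : ℂ) = _
  obtain rfl | rfl | rfl | rfl : j = 0 ∨ j = 1 ∨ j = 2 ∨ j = 3 := by decide +revert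
  · rw [neg_zero, show ZMod.χ₄ 0 = 0 by decide, sub_self, zero_div, Int.cast_zero]
  · rw [show (-1 : ZMod 4) = 3 by decide, show ZMod.χ₄ 1 = 1 by decide, hone, hthree]
    field_simp
    norm_num
  · rw [show (-2 : ZMod 4) = 2 by decide, show ZMod.χ₄ 2 = 0 by decide, sub_self,
      zero_div, Int.cast_zero]
  · rw [show (-3 : ZMod 4) = 1 by decide, show ZMod.χ₄ 3 = -1 by decide, hone, hthree]
    field_simp
    norm_num

lemma Lchi4_eq_sinZeta_quarter (s : ℂ) : Lchi4 s = sinZeta (1 / 4 : ℝ) s := by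
  have hexp (j : ZMod 4) (hj : j ≠ 0) := ZMod.LFunction_stdAddChar_eq_expZeta j s (.inl hj)
  have hquarter : ZMod.toAddCircle (1 : ZMod 4) = ((1 / 4 : ℝ) : UnitAddCircle) := by
    simpa using ZMod.toAddCircle_natCast (N := 4) 1
  rw [sinZeta_eq, ← hquarter, ← map_neg, ← hexp 1 (by decide), ← hexp (-1) (by decide)]
  simp only [Lchi4, DirichletCharacter.LFunction, ZMod.LFunction, chi4_eq_stdAddChar_sub, one_mul,
    neg_one_mul, ← mul_sub, ← sum_sub_distrib, mul_div_assoc, sum_div, ← sub_mul, mul_sum]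
  exact sum_congr rfl fun j _ => by ring

end QuarterSineZeta

lemma LamI_eq (n : ℕ) : LamI n = -scaledBernoulli n (1 / 4) := by
  rcases n.even_or_odd with hn | hn
  · rw [LamI, if_pos hn, riemannZeta_eq_scaledBernoulli_of_even hn,
      scaledBernoulli_quarter_of_even hn, zpow_sub₀ two_ne_zero, zpow_one, zpow_natCast]
    ring
  · rw [LamI, if_neg (Nat.not_even_iff_odd.2 hn), Lchi4_eq_sinZeta_quarter,
      sinZeta_quarter_of_odd hn]
    linear_combination scaledBernoulli n (1 / 4) * I_sq

lemma LamNegI_eq (n : ℕ) : LamNegI n = -scaledBernoulli n (3 / 4) := by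
  have hneg : LamNegI n = (-1) ^ n * LamI n := by
    unfold LamNegI LamI
    split_ifs with hn
    · rw [hn.neg_one_pow, one_mul]
    · rw [(Nat.not_even_iff_odd.1 hn).neg_one_pow, neg_one_mul]
  rw [hneg, LamI_eq, mul_neg, ← scaledBernoulli_one_sub]
  norm_num

lemma sum_range_mul_sum_range_comm {R : Type*} [CommSemiring R] (a b c : ℕ → R) (n : ℕ) :
    ∑ j ∈ range (n + 1), a (n - j) * ∑ k ∈ range (j + 1), b (j - k) * c k =
      ∑ m ∈ range (n + 1), (∑ k ∈ range (m + 1), a (m - k) * c k) * b (n - m) := by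
  have h := congrArg (PowerSeries.coeff n) (show
    PowerSeries.mk c * PowerSeries.mk b * PowerSeries.mk a =
      PowerSeries.mk c * PowerSeries.mk a * PowerSeries.mk b by ring)
  simp only [PowerSeries.coeff_mul, Nat.sum_antidiagonal_eq_sum_range_succ_mk,
    PowerSeries.coeff_mk] at h
  simpa only [mul_comm] using h

lemma sum_phi_eps_mul_sum (p : ℕ) (h : ℕ → ℂ) (y : ℂ) :
    ∑ j ∈ range (p + 1), phi ((p - j : ℕ) : ℂ) * eps (p - j) *
        ∑ ξ ∈ range (j + 1), h (j - ξ) * (2 * π * I * y) ^ ξ / (Nat.factorial ξ : ℂ) =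
      (1 / 2) * ∑ ξ ∈ range (p + 1), -scaledBernoulli ξ (1 / 2 + y) * h (p - ξ) := by
  simp only [mul_div_assoc, phi_mul_eps]
  rw [sum_range_mul_sum_range_comm (fun m => -scaledBernoulli m (1 / 2) / 2), mul_sum]
  refine sum_congr rfl fun n _ => ?_
  rw [scaledBernoulli_add, ← sum_neg_distrib, sum_mul, sum_mul, mul_sum]
  exact sum_congr rfl fun k _ => by ring

/-- Lemma 6.1 of Komori–Matsumoto–Tsumura. -/
theorem sum_phi_eps_quarter (p : ℕ) (hp : 0 < p) (h : ℕ → ℂ) :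
    (∑ j ∈ range (p + 1), phi ((p - j : ℕ) : ℂ) * eps (p - j) *
        ∑ ξ ∈ range (j + 1),
          h (j - ξ) * (-(Complex.I * (π : ℂ)) / 2) ^ ξ / (Nat.factorial ξ : ℂ) =
      (1 / 2) * ∑ ξ ∈ range (p + 1), LamI ξ * h (p - ξ)) ∧
    (∑ j ∈ range (p + 1), phi ((p - j : ℕ) : ℂ) * eps (p - j) *
        ∑ ξ ∈ range (j + 1),
          h (j - ξ) * ((Complex.I * (π : ℂ)) / 2) ^ ξ / (Nat.factorial ξ : ℂ) =
      (1 / 2) * ∑ ξ ∈ range (p + 1), LamNegI ξ * h (p - ξ)) := by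
  have hneg : -(I * π) / 2 = 2 * π * I * (-1 / 4) := by ring
  have hpos : I * π / 2 = 2 * π * I * (1 / 4) := by ring
  simp only [LamI_eq, LamNegI_eq]
  rw [hneg, hpos, sum_phi_eps_mul_sum, sum_phi_eps_mul_sum]
  norm_num
end

section
/- For every positive integer k, both Z_{λ₂}(2k, 2k+1, 2k+1, 2k+1, 2k+1, 2k+1) and Z_{A₃}(2k, 2k+1, 2k+1, 2k+1, 2k+1, 2k+1) belong to the ℚ-subalgebra of ℝ generated by the set of Riemann zeta values {ζ(j) : j an integer, j ≥ 2}. -/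
open Complex

/-- Generic real triple zeta-sum of type `A₃` with a weight `w` on `(l,m,n)`,
at positive integer arguments. -/
noncomputable def Z3r (w : ℕ → ℕ → ℕ → ℝ) (s₁ s₂ s₃ s₄ s₅ s₆ : ℕ) : ℝ :=
  ∑' t : ℕ × ℕ × ℕ,
    w (t.1 + 1) (t.2.1 + 1) (t.2.2 + 1) /
      (((t.1 + 1 : ℕ) : ℝ) ^ s₁ * ((t.2.1 + 1 : ℕ) : ℝ) ^ s₂ *
        ((t.2.2 + 1 : ℕ) : ℝ) ^ s₃ * ((t.1 + 1 + (t.2.1 + 1) : ℕ) : ℝ) ^ s₄ *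
        ((t.2.1 + 1 + (t.2.2 + 1) : ℕ) : ℝ) ^ s₅ *
        ((t.1 + 1 + (t.2.1 + 1) + (t.2.2 + 1) : ℕ) : ℝ) ^ s₆)

/-- `ζ₃(s₁,…,s₆;A₃)` at positive integer arguments. -/
noncomputable def ZA3r : ℕ → ℕ → ℕ → ℕ → ℕ → ℕ → ℝ := Z3r (fun _ _ _ => 1)

/-- `ζ₃(s₁,…,s₆,λ₂∨;SU(4))` at positive integer arguments, with numerator `(-1)^{l+n}`. -/
noncomputable def Zlam2r : ℕ → ℕ → ℕ → ℕ → ℕ → ℕ → ℝ :=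
  Z3r (fun l _ n => (-1 : ℝ) ^ (l + n))

/-- The set of values `ζ(j)` of the Riemann zeta function at integers `j ≥ 2`,
viewed inside `ℝ`. -/
def zetaValues : Set ℝ := {x : ℝ | ∃ j : ℕ, 2 ≤ j ∧ (x : ℂ) = riemannZeta j}

/-!
For integer points `0, a, d, c` with `a > 0`, let `T (a, d, c)` be `s ^ (a + d + c)`, with
`s = ±1`, divided by the product of their six pairwise differences, where `c - d` has exponent
`q = 2 * k` and the other differences have exponent `q + 1`. The sum of `T` is computed in two ways.

Summing over `c` and then over `d`, partial fractions at the remaining points reduce each sum to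
symmetric sums `∑ s ^ n / n ^ r` over `n ≠ 0` in `ℤ`, which are rational combinations of zeta
values; the coefficients are polynomials in the signs `s ^ b` and in the inverse differences of the
remaining points `b`. The last sum, over `a`, is then a polynomial in zeta values.

On the other hand `T` is symmetric in `c` and `d`, and `c < d` leaves six orderings of the four
points. If `x, y, z` are the successive gaps, then `T` is `± (d - c)` times the summand with all six
exponents equal to `q + 1`, and the six factors `± (d - c)` add up to `x + z`. By the symmetry
`x ↔ z` the sum of `T` is therefore four times the series whose first exponent is lowered to `q`.
-/

open Filter Topology SummationFilter

section SymmetricSums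

variable {E : Type*} [AddCommGroup E] {f : ℤ → E} {a : E}

lemma sum_Icc_neg_comp_add_one (f : ℤ → E) (N : ℕ) :
    ∑ c ∈ Finset.Icc (-(N : ℤ)) N, f (c + 1)
      = ∑ c ∈ Finset.Icc (-(N : ℤ)) N, f c + (f (N + 1) - f (-N)) := by
  induction N with
  | zero => simp
  | succ N ih =>
    have hneg : -((N : ℤ) + 1) + 1 = -N := by ring
    rw [Nat.cast_succ, Finset.sum_Icc_succ_eq_add_endpoints, Finset.sum_Icc_succ_eq_add_endpoints,
      ih, hneg]
    abel

variable [TopologicalSpace E] [IsTopologicalAddGroup E]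

lemma hasSum_symmetricIcc_comp_add_one_iff (hf : Tendsto f cofinite (𝓝 0)) :
    HasSum (fun c ↦ f (c + 1)) a (symmetricIcc ℤ) ↔ HasSum f a (symmetricIcc ℤ) := by
  rw [Int.cofinite_eq, tendsto_sup] at hf
  have hN : Tendsto (fun N : ℕ ↦ (N : ℤ)) atTop atTop := tendsto_natCast_atTop_atTop
  have hboundary : Tendsto (fun N : ℕ ↦ f (N + 1) - f (-N)) atTop (𝓝 0) := by
    simpa using (hf.2.comp (tendsto_atTop_add_const_right _ 1 hN)).sub
      (hf.1.comp (tendsto_neg_atTop_atBot.comp hN))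
  simp only [hasSum_symmetricIcc_iff, sum_Icc_neg_comp_add_one]
  exact ⟨fun h ↦ by simpa using h.sub hboundary, fun h ↦ by simpa using h.add hboundary⟩

lemma hasSum_symmetricIcc_comp_add (hf : Tendsto f cofinite (𝓝 0))
    (h : HasSum f a (symmetricIcc ℤ)) (u : ℤ) :
    HasSum (fun c ↦ f (c + u)) a (symmetricIcc ℤ) := by
  have hshift (v : ℤ) : Tendsto (fun c ↦ f (c + v)) cofinite (𝓝 0) :=
    hf.comp (add_left_injective v).tendsto_cofinite
  induction u using Int.induction_on with
  | zero => simpa using h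
  | succ i ih =>
    simpa only [add_right_comm _ (1 : ℤ), add_assoc] using
      (hasSum_symmetricIcc_comp_add_one_iff (hshift i)).2 ih
  | pred i ih =>
    refine (hasSum_symmetricIcc_comp_add_one_iff (hshift (-i - 1))).1 ?_
    convert ih using 3
    ring

end SymmetricSums

section Signs

variable {s : ℝ}

lemma ne_zero_of_abs_eq_one (hs : |s| = 1) : s ≠ 0 := by
  rintro rfl
  simp at hs

lemma abs_mul_eq_one {t : ℝ} (hs : |s| = 1) (ht : |t| = 1) : |s * t| = 1 := by
  rw [abs_mul, hs, ht, one_mul]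

lemma norm_sign_zpow_mul (hs : |s| = 1) (c : ℤ) (x : ℝ) : ‖s ^ c * x‖ = ‖x‖ := by
  rw [norm_mul, norm_zpow, Real.norm_eq_abs, hs, one_zpow, one_mul]

lemma zpow_eq_zpow_of_even_sub (hs : |s| = 1) {b c : ℤ} (h : Even (b - c)) : s ^ b = s ^ c := by
  rw [← sub_add_cancel b c, zpow_add₀ (ne_zero_of_abs_eq_one hs), ← h.zpow_abs, hs, one_zpow,
    one_mul]

lemma zpow_neg_of_abs_eq_one (hs : |s| = 1) (c : ℤ) : s ^ (-c) = s ^ c :=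
  zpow_eq_zpow_of_even_sub hs ⟨-c, by ring⟩

end Signs

/-- The `ℚ`-subalgebra of `ℝ` generated by the zeta values `ζ(j)`, `j ≥ 2`. -/
noncomputable abbrev zetaAlgebra : Subalgebra ℚ ℝ := Algebra.adjoin ℚ zetaValues

lemma sign_zpow_mem_zetaAlgebra {t : ℝ} (ht : |t| = 1) (c : ℤ) : t ^ c ∈ zetaAlgebra := by
  rcases (abs_eq zero_le_one).1 ht with rfl | rfl
  · simp
  · simpa using zetaAlgebra.algebraMap_mem ((-1) ^ c)

lemma tsum_nat_inv_pow_mem_zetaAlgebra {r : ℕ} (hr : 2 ≤ r) :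
    ∑' n : ℕ, ((n : ℝ)⁻¹) ^ r ∈ zetaAlgebra := by
  refine Algebra.subset_adjoin ⟨r, hr, ?_⟩
  rw [zeta_nat_eq_tsum_of_gt_one hr, Complex.ofReal_tsum]
  simp

lemma summable_nat_inv_pow {r : ℕ} (hr : 2 ≤ r) : Summable fun n : ℕ ↦ ((n : ℝ)⁻¹) ^ r := by
  simpa only [inv_pow] using Real.summable_nat_pow_inv.2 hr

lemma summable_sign_zpow_mul_inv_pow {s : ℝ} (hs : |s| = 1) {r : ℕ} (hr : 2 ≤ r) :
    Summable fun c : ℤ ↦ s ^ c * ((c : ℝ)⁻¹) ^ r := by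
  refine Summable.of_norm ?_
  simp only [norm_sign_zpow_mul hs]
  simpa using (Real.summable_one_div_int_pow.2 hr).norm

lemma tsum_nat_alternating_inv_pow {r : ℕ} (hr : 2 ≤ r) :
    ∑' n : ℕ, (-1 : ℝ) ^ n * ((n : ℝ)⁻¹) ^ r
      = (2 * (2⁻¹) ^ r - 1) * ∑' n : ℕ, ((n : ℝ)⁻¹) ^ r := by
  have hz := (summable_nat_inv_pow hr).hasSum
  obtain ⟨o, hodd⟩ : Summable fun n : ℕ ↦ (((2 * n + 1 : ℕ) : ℝ)⁻¹) ^ r :=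
    hz.summable.comp_injective (i := fun n : ℕ ↦ 2 * n + 1) fun m n h ↦ by simpa using h
  have heven := hz.mul_left ((2⁻¹) ^ r)
  simp only [← mul_pow, ← mul_inv] at heven
  have hsplit : (2⁻¹) ^ r * ∑' n : ℕ, ((n : ℝ)⁻¹) ^ r + o = ∑' n : ℕ, ((n : ℝ)⁻¹) ^ r :=
    (HasSum.even_add_odd (by simpa using heven) hodd).unique hz
  have halt : HasSum (fun n : ℕ ↦ (-1 : ℝ) ^ n * ((n : ℝ)⁻¹) ^ r)
      ((2⁻¹) ^ r * ∑' n : ℕ, ((n : ℝ)⁻¹) ^ r + -o) :=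
    HasSum.even_add_odd (by simpa [pow_mul] using heven)
      (by simpa [pow_succ, pow_mul] using hodd.neg)
  rw [halt.tsum_eq]
  linear_combination -hsplit

lemma tsum_pnat_sign_zpow_mul_inv_pow_mem {s : ℝ} (hs : |s| = 1) {r : ℕ} (hr : 2 ≤ r) :
    ∑' n : ℕ+, s ^ (n : ℤ) * ((n : ℝ)⁻¹) ^ r ∈ zetaAlgebra := by
  have hnat : ∑' n : ℕ+, s ^ (n : ℤ) * ((n : ℝ)⁻¹) ^ r = ∑' n : ℕ, s ^ n * ((n : ℝ)⁻¹) ^ r := by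
    simpa only [zpow_natCast] using tsum_pnat_eq_tsum_of_eq_zero
      (f := fun n : ℕ ↦ s ^ n * ((n : ℝ)⁻¹) ^ r) (by simp [show r ≠ 0 by omega])
  have hz := tsum_nat_inv_pow_mem_zetaAlgebra hr
  rw [hnat]
  rcases (abs_eq zero_le_one).1 hs with rfl | rfl
  · simpa using hz
  · rw [tsum_nat_alternating_inv_pow hr]
    refine zetaAlgebra.mul_mem ?_ hz
    simpa using zetaAlgebra.algebraMap_mem (2 * (2⁻¹) ^ r - 1 : ℚ)

lemma exists_hasSum_sign_zpow_mul_inv_pow {s : ℝ} (hs : |s| = 1) {r : ℕ} (hr : r ≠ 0) :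
    ∃ a ∈ zetaAlgebra, HasSum (fun c : ℤ ↦ s ^ c * ((c : ℝ)⁻¹) ^ r) a (symmetricIcc ℤ) := by
  rcases Nat.even_or_odd r with he | ho
  · have hr2 : 2 ≤ r := by obtain ⟨t, rfl⟩ := he; omega
    have hf := summable_sign_zpow_mul_inv_pow hs hr2
    refine ⟨_, ?_, hf.hasSum.mono_left (symmetricIcc ℤ).le_atTop⟩
    rw [tsum_int_eq_zero_add_two_mul_tsum_pnat (fun c ↦ ?_) hf]
    · simpa [hr] using zetaAlgebra.nsmul_mem (tsum_pnat_sign_zpow_mul_inv_pow_mem hs hr2) 2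
    · rw [zpow_neg_of_abs_eq_one hs, Int.cast_neg, inv_neg, he.neg_pow]
  · have hodd : (fun c : ℤ ↦ s ^ c * ((c : ℝ)⁻¹) ^ r).Odd := fun c ↦ by
      simp only [zpow_neg_of_abs_eq_one hs, Int.cast_neg, inv_neg, ho.neg_pow, mul_neg]
    refine ⟨0, zetaAlgebra.zero_mem, hasSum_symmetricIcc_iff.2 ?_⟩
    refine tendsto_const_nhds.congr fun N ↦ ?_
    refine (hodd.finsetSum_eq_zero ?_).symm
    ext c
    simp [neg_le, and_comm]

lemma tendsto_sign_zpow_mul_inv_pow {s : ℝ} (hs : |s| = 1) {r : ℕ} (hr : r ≠ 0) :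
    Tendsto (fun c : ℤ ↦ s ^ c * ((c : ℝ)⁻¹) ^ r) cofinite (𝓝 0) := by
  refine tendsto_zero_iff_norm_tendsto_zero.2 ?_
  simp only [norm_sign_zpow_mul hs]
  have hinv : Tendsto (fun c : ℤ ↦ (c : ℝ)⁻¹) cofinite (𝓝 0) :=
    tendsto_inv₀_cobounded.comp (Metric.cobounded_eq_cocompact (α := ℝ) ▸ Int.tendsto_coe_cofinite)
  simpa [hr] using (hinv.pow r).norm

lemma exists_hasSum_sign_zpow_mul_inv_sub_pow {s : ℝ} (hs : |s| = 1) {r : ℕ} (hr : r ≠ 0) :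
    ∃ a ∈ zetaAlgebra, ∀ u : ℤ,
      HasSum (fun c : ℤ ↦ s ^ c * (((c : ℝ) - u)⁻¹) ^ r) (s ^ u * a) (symmetricIcc ℤ) := by
  obtain ⟨a, ha, h⟩ := exists_hasSum_sign_zpow_mul_inv_pow hs hr
  refine ⟨a, ha, fun u ↦ ?_⟩
  have hshift := (hasSum_symmetricIcc_comp_add (tendsto_sign_zpow_mul_inv_pow hs hr) h
    (-u)).mul_left (s ^ u)
  simpa only [← mul_assoc, ← zpow_add₀ (ne_zero_of_abs_eq_one hs), ← sub_eq_add_neg,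
    add_sub_cancel, Int.cast_sub] using hshift

/-- The functions of `n` integer points which generate `configAlgebra n`. As `0⁻¹ = 0`, the
generators `inv_sub` vanish when their two points collide. -/
inductive IsConfigGenerator {n : ℕ} : ((Fin n → ℤ) → ℝ) → Prop
  | const {a : ℝ} (ha : a ∈ zetaAlgebra) : IsConfigGenerator fun _ ↦ a
  | sign {t : ℝ} (ht : |t| = 1) (i : Fin n) : IsConfigGenerator fun w ↦ t ^ w i
  | inv_sub (i j : Fin n) : IsConfigGenerator fun w ↦ ((w i : ℝ) - w j)⁻¹

/-- The algebra of functions of `n` integer points `w i` generated by the constants in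
`zetaAlgebra`, the signs `(±1) ^ w i` and the inverse differences of the points. It is stable
under summation over one of the points. -/
noncomputable def configAlgebra (n : ℕ) : Subalgebra ℚ ((Fin n → ℤ) → ℝ) :=
  Algebra.adjoin ℚ {f | IsConfigGenerator f}

namespace configAlgebra

variable {n : ℕ}

lemma const_mem {a : ℝ} (ha : a ∈ zetaAlgebra) : (fun _ ↦ a) ∈ configAlgebra n :=
  Algebra.subset_adjoin (.const ha)

lemma sign_mem {t : ℝ} (ht : |t| = 1) (i : Fin n) : (fun w ↦ t ^ w i) ∈ configAlgebra n :=
  Algebra.subset_adjoin (.sign ht i)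

lemma inv_sub_mem (i j : Fin n) : (fun w ↦ ((w i : ℝ) - w j)⁻¹) ∈ configAlgebra n :=
  Algebra.subset_adjoin (.inv_sub i j)

@[elab_as_elim]
theorem induction_left {P : ∀ f : (Fin n → ℤ) → ℝ, f ∈ configAlgebra n → Prop}
    (one : P 1 (one_mem _))
    (generator_mul : ∀ x f (hx : IsConfigGenerator x) (hf : f ∈ configAlgebra n), P f hf →
      P (x * f) (mul_mem (Algebra.subset_adjoin hx) hf))
    (add : ∀ f g (hf : f ∈ configAlgebra n) (hg : g ∈ configAlgebra n), P f hf → P g hg →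
      P (f + g) (add_mem hf hg))
    {f : (Fin n → ℤ) → ℝ} (hf : f ∈ configAlgebra n) : P f hf := by
  suffices ∃ hf, P f hf from this.2
  rw [configAlgebra, ← Subalgebra.mem_toSubmodule, Algebra.adjoin_eq_span] at hf
  induction hf using Submodule.span_induction with
  | mem x hx =>
    induction hx using Submonoid.closure_induction_left with
    | one => exact ⟨_, one⟩
    | mul_left x hx y _ ih => exact ⟨_, generator_mul x y hx ih.1 ih.2⟩
  | zero =>
    have hzero := generator_mul _ _ (.const zetaAlgebra.zero_mem) _ one
    exact ⟨zero_mem _, by simpa only [← Pi.zero_def, zero_mul] using hzero⟩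
  | add x y _ _ hx hy => exact ⟨_, add x y hx.1 hy.1 hx.2 hy.2⟩
  | smul q x _ hx =>
    rw [Algebra.smul_def]
    exact ⟨_, generator_mul _ _ (.const (zetaAlgebra.algebraMap_mem q)) hx.1 hx.2⟩

lemma apply_mem {f : (Fin n → ℤ) → ℝ} (hf : f ∈ configAlgebra n) (w : Fin n → ℤ) :
    f w ∈ zetaAlgebra := by
  induction hf using induction_left with
  | one => exact one_mem _
  | add f g _ _ hf hg => exact add_mem hf hg
  | generator_mul x f hx _ hf =>
    refine mul_mem ?_ hf
    cases hx with
    | const ha => exact ha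
    | sign ht i => exact sign_zpow_mem_zetaAlgebra ht (w i)
    | inv_sub i j => simpa using zetaAlgebra.algebraMap_mem (((w i : ℚ) - w j)⁻¹)

end configAlgebra

lemma IsConfigGenerator.cons_cases {n : ℕ} {x : (Fin (n + 1) → ℤ) → ℝ}
    (hx : IsConfigGenerator x) :
    (∃ h ∈ configAlgebra n, ∀ c w, x (Fin.cons c w) = h w) ∨
      (∃ t : ℝ, |t| = 1 ∧ ∀ c w, x (Fin.cons c w) = t ^ c) ∨
      ∃ a ∈ zetaAlgebra, ∃ i : Fin n, ∀ c w, x (Fin.cons c w) = a * ((c : ℝ) - w i)⁻¹ := by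
  cases hx with
  | const ha => exact .inl ⟨_, configAlgebra.const_mem ha, fun _ _ ↦ rfl⟩
  | @sign t ht i =>
    cases i using Fin.cases with
    | zero => exact .inr (.inl ⟨t, ht, fun _ _ ↦ rfl⟩)
    | succ i => exact .inl ⟨_, configAlgebra.sign_mem ht i, fun _ _ ↦ rfl⟩
  | inv_sub i j =>
    cases i using Fin.cases with
    | zero =>
      cases j using Fin.cases with
      | zero => exact .inl ⟨0, zero_mem _, fun _ _ ↦ by simp⟩
      | succ j => exact .inr (.inr ⟨1, one_mem _, j, fun _ _ ↦ by simp⟩)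
    | succ i =>
      cases j using Fin.cases with
      | zero =>
        refine .inr (.inr ⟨-1, neg_mem (one_mem _), i, fun c w ↦ ?_⟩)
        simp only [Fin.cons_succ, Fin.cons_zero]
        rw [neg_one_mul, ← inv_neg, neg_sub]
      | succ j => exact .inl ⟨_, configAlgebra.inv_sub_mem i j, fun _ _ ↦ rfl⟩

/-- Symmetric summation of `F` over the integers which are not among the points `w i`. -/
def HasSumOff {n : ℕ} (w : Fin n → ℤ) (F : ℤ → ℝ) (a : ℝ) : Prop :=
  HasSum ((Set.range w)ᶜ.indicator F) a (symmetricIcc ℤ)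

namespace HasSumOff

variable {n : ℕ} {w : Fin n → ℤ} {F G : ℤ → ℝ} {a b : ℝ}

lemma of_hasSum (hw : w.Injective) (h : HasSum F a (symmetricIcc ℤ)) :
    HasSumOff w F (a - ∑ i, F (w i)) := by
  have hrange : HasSum ((Set.range w).indicator F) (∑ i, F (w i)) (symmetricIcc ℤ) := by
    have hsum : ∑ c ∈ Finset.univ.image w, (Set.range w).indicator F c = ∑ i, F (w i) := by
      simp [Finset.sum_image hw.injOn]
    rw [← hsum]
    exact hasSum_sum_of_ne_finset_zero fun c hc ↦ by simp_all
  rw [HasSumOff, Set.indicator_compl]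
  exact h.sub hrange

lemma congr (h : HasSumOff w F a) (hFG : ∀ c ∉ Set.range w, F c = G c) : HasSumOff w G a := by
  rwa [HasSumOff, ← Set.indicator_congr (s := (Set.range w)ᶜ) (f := F) hFG]

lemma add (hF : HasSumOff w F a) (hG : HasSumOff w G b) :
    HasSumOff w (fun c ↦ F c + G c) (a + b) := by
  rw [HasSumOff, Set.indicator_add]
  exact HasSum.add hF hG

lemma const_mul (h : HasSumOff w F a) (r : ℝ) : HasSumOff w (fun c ↦ r * F c) (r * a) := by
  rw [HasSumOff, funext (Set.indicator_const_mul _ F r)]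
  exact HasSum.mul_left r h

lemma tsum_eq (h : HasSumOff w F a) (hF : Summable F) (hzero : ∀ i, F (w i) = 0) :
    ∑' c, F c = a := by
  have hsupp : (Set.range w)ᶜ.indicator F = F := by
    refine Set.indicator_eq_self.2 fun c hc ↦ ?_
    rintro ⟨i, rfl⟩
    exact hc (hzero i)
  rw [HasSumOff, hsupp] at h
  have hsum : HasSum F (∑' c, F c) (symmetricIcc ℤ) :=
    hF.hasSum.mono_left (symmetricIcc ℤ).le_atTop
  exact hsum.unique h

end HasSumOff

/-- Summing `F w c` over the integers `c` different from all the points `w i` gives a function of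
`w` in `configAlgebra n`. -/
def HasConfigSum {n : ℕ} (F : (Fin n → ℤ) → ℤ → ℝ) : Prop :=
  ∃ g ∈ configAlgebra n, ∀ w, w.Injective → HasSumOff w (F w) (g w)

namespace HasConfigSum

variable {n : ℕ} {F G : (Fin n → ℤ) → ℤ → ℝ}

lemma congr (hF : HasConfigSum F)
    (h : ∀ w, w.Injective → ∀ c ∉ Set.range w, F w c = G w c) : HasConfigSum G := by
  obtain ⟨g, hg, hsum⟩ := hF
  exact ⟨g, hg, fun w hw ↦ (hsum w hw).congr (h w hw)⟩

lemma add (hF : HasConfigSum F) (hG : HasConfigSum G) :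
    HasConfigSum fun w c ↦ F w c + G w c := by
  obtain ⟨f, hf, hfsum⟩ := hF
  obtain ⟨g, hg, hgsum⟩ := hG
  exact ⟨f + g, add_mem hf hg, fun w hw ↦ (hfsum w hw).add (hgsum w hw)⟩

lemma mul_left (hF : HasConfigSum F) {h : (Fin n → ℤ) → ℝ} (hh : h ∈ configAlgebra n) :
    HasConfigSum fun w c ↦ h w * F w c := by
  obtain ⟨f, hf, hfsum⟩ := hF
  exact ⟨h * f, mul_mem hh hf, fun w hw ↦ (hfsum w hw).const_mul (h w)⟩

end HasConfigSum

/-- The rational function `∏ i ∈ M, (c - w i)⁻¹` of `c`, with poles at the points `w i`. -/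
noncomputable def poleProduct {n : ℕ} (w : Fin n → ℤ) (M : Multiset (Fin n)) (c : ℤ) : ℝ :=
  (M.map fun i ↦ ((c : ℝ) - w i)⁻¹).prod

section PoleProduct

variable {n : ℕ} {s : ℝ}

lemma poleProduct_cons (w : Fin n → ℤ) (i : Fin n) (M : Multiset (Fin n)) (c : ℤ) :
    poleProduct w (i ::ₘ M) c = ((c : ℝ) - w i)⁻¹ * poleProduct w M c := by
  simp [poleProduct]

lemma poleProduct_add (w : Fin n → ℤ) (M N : Multiset (Fin n)) (c : ℤ) :
    poleProduct w (M + N) c = poleProduct w M c * poleProduct w N c := by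
  simp [poleProduct]

lemma poleProduct_replicate (w : Fin n → ℤ) (r : ℕ) (i : Fin n) (c : ℤ) :
    poleProduct w (.replicate r i) c = (((c : ℝ) - w i)⁻¹) ^ r := by
  simp [poleProduct]

lemma poleProduct_cons_cons {w : Fin n → ℤ} {i j : Fin n} (hij : w i ≠ w j)
    (M : Multiset (Fin n)) {c : ℤ} (hc : c ∉ Set.range w) :
    poleProduct w (i ::ₘ j ::ₘ M) c
      = ((w i : ℝ) - w j)⁻¹ * poleProduct w (i ::ₘ M) c
        + ((w j : ℝ) - w i)⁻¹ * poleProduct w (j ::ₘ M) c := by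
  have hc' (k : Fin n) : (c : ℝ) - w k ≠ 0 := by
    rw [sub_ne_zero, Ne, Int.cast_inj]
    exact fun h ↦ hc ⟨k, h.symm⟩
  have hij' : (w i : ℝ) - w j ≠ 0 := by rwa [sub_ne_zero, Ne, Int.cast_inj]
  have hi := hc' i
  have hj := hc' j
  rw [← neg_sub (w i : ℝ), poleProduct_cons, poleProduct_cons, poleProduct_cons]
  field_simp
  ring

lemma hasConfigSum_sign_zpow_mul_inv_sub_pow (hs : |s| = 1) {r : ℕ} (hr : r ≠ 0) (i : Fin n) :
    HasConfigSum fun w c ↦ s ^ c * (((c : ℝ) - w i)⁻¹) ^ r := by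
  obtain ⟨a, ha, hsum⟩ := exists_hasSum_sign_zpow_mul_inv_sub_pow hs hr
  have hmem (j : Fin n) : (fun w ↦ s ^ w j * (((w j : ℝ) - w i)⁻¹) ^ r) ∈ configAlgebra n :=
    mul_mem (configAlgebra.sign_mem hs j) (pow_mem (configAlgebra.inv_sub_mem j i) r)
  refine ⟨_, sub_mem (mul_mem (configAlgebra.sign_mem hs i) (configAlgebra.const_mem ha))
    (sum_mem fun j (_ : j ∈ Finset.univ) ↦ hmem j), fun w hw ↦ ?_⟩
  simpa using HasSumOff.of_hasSum hw (hsum (w i))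

theorem hasConfigSum_sign_zpow_mul_poleProduct (hs : |s| = 1) {M : Multiset (Fin n)} (hM : M ≠ 0) :
    HasConfigSum fun w c ↦ s ^ c * poleProduct w M c := by
  induction M using Multiset.strongInductionOn with | ih M ih =>
  obtain ⟨i, hi⟩ := Multiset.exists_mem_of_ne_zero hM
  obtain ⟨M, rfl⟩ := Multiset.exists_cons_of_mem hi
  by_cases hall : ∀ j ∈ M, j = i
  · rw [Multiset.eq_replicate_card.2 hall, ← Multiset.replicate_succ]
    simpa only [poleProduct_replicate] using
      hasConfigSum_sign_zpow_mul_inv_sub_pow hs (Nat.succ_ne_zero _) i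
  push Not at hall
  obtain ⟨j, hj, hji⟩ := hall
  obtain ⟨M, rfl⟩ := Multiset.exists_cons_of_mem hj
  have hi := ih (i ::ₘ M) (Multiset.cons_lt_cons i (Multiset.lt_cons_self M j))
    Multiset.cons_ne_zero
  have hj := ih (j ::ₘ M) (Multiset.lt_cons_self _ i) Multiset.cons_ne_zero
  refine ((hi.mul_left (configAlgebra.inv_sub_mem i j)).add
    (hj.mul_left (configAlgebra.inv_sub_mem j i))).congr fun w hw c hc ↦ ?_
  rw [poleProduct_cons_cons (hw.ne hji.symm) M hc]
  ring

theorem hasConfigSum_mul_cons {f : (Fin (n + 1) → ℤ) → ℝ} (hf : f ∈ configAlgebra (n + 1))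
    (hs : |s| = 1) {M : Multiset (Fin n)} (hM : M ≠ 0) :
    HasConfigSum fun w c ↦ s ^ c * poleProduct w M c * f (Fin.cons c w) := by
  induction hf using configAlgebra.induction_left generalizing s M with
  | one => simpa using hasConfigSum_sign_zpow_mul_poleProduct hs hM
  | add f g _ _ hf hg => simpa only [Pi.add_apply, mul_add] using (hf hs hM).add (hg hs hM)
  | generator_mul x f hx _ hf =>
    obtain ⟨h, hh, hxh⟩ | ⟨t, ht, hxt⟩ | ⟨a, ha, i, hxi⟩ := hx.cons_cases
    · refine ((hf hs hM).mul_left hh).congr fun w _ c _ ↦ ?_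
      rw [Pi.mul_apply, hxh]
      ring
    · refine (hf (abs_mul_eq_one hs ht) hM).congr fun w _ c _ ↦ ?_
      rw [Pi.mul_apply, hxt, mul_zpow]
      ring
    · refine ((hf hs (Multiset.cons_ne_zero (a := i) (m := M))).mul_left
        (configAlgebra.const_mem ha)).congr fun w _ c _ ↦ ?_
      rw [Pi.mul_apply, hxi, poleProduct_cons]
      ring

lemma poleProduct_apply_self (w : Fin n → ℤ) {i : Fin n} {M : Multiset (Fin n)} (hi : i ∈ M) :
    poleProduct w M (w i) = 0 := by
  obtain ⟨M, rfl⟩ := Multiset.exists_cons_of_mem hi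
  rw [poleProduct_cons, sub_self, inv_zero, zero_mul]

lemma poleProduct_ne_zero {w : Fin n → ℤ} {c : ℤ} (hc : c ∉ Set.range w) (M : Multiset (Fin n)) :
    poleProduct w M c ≠ 0 := by
  rw [poleProduct, Ne, Multiset.prod_eq_zero_iff, Multiset.mem_map]
  rintro ⟨i, -, hi⟩
  rw [inv_eq_zero, sub_eq_zero, Int.cast_inj] at hi
  exact hc ⟨i, hi.symm⟩

theorem exists_tsum_poleProduct_mul_cons_eq [NeZero n] {f : (Fin (n + 1) → ℤ) → ℝ}
    (hf : f ∈ configAlgebra (n + 1)) (hs : |s| = 1) {M : Multiset (Fin n)} (hM : ∀ i, i ∈ M) :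
    ∃ g ∈ configAlgebra n, ∀ w, w.Injective →
      Summable (fun c ↦ s ^ c * poleProduct w M c * f (Fin.cons c w)) →
      ∑' c, s ^ c * poleProduct w M c * f (Fin.cons c w) = g w := by
  have hM0 : M ≠ 0 := fun h ↦ by simpa [h] using hM 0
  obtain ⟨g, hg, hsum⟩ := hasConfigSum_mul_cons hf hs hM0
  refine ⟨g, hg, fun w hw hF ↦ (hsum w hw).tsum_eq hF fun i ↦ ?_⟩
  simp only [poleProduct_apply_self w (hM i), mul_zero, zero_mul]

end PoleProduct

lemma summable_pnat_sign_zpow_mul_inv_pow {s : ℝ} (hs : |s| = 1) {p : ℕ} (hp : 2 ≤ p) :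
    Summable fun a : ℕ+ ↦ s ^ (a : ℤ) * ((a : ℝ)⁻¹) ^ p := by
  refine ((summable_sign_zpow_mul_inv_pow hs hp).comp_injective
    (i := fun a : ℕ+ ↦ (a : ℤ)) fun a b h ↦ ?_).congr fun a ↦ ?_
  · simpa using h
  · simp

theorem tsum_pnat_sign_zpow_mul_inv_pow_mul_mem {f : (Fin 2 → ℤ) → ℝ} (hf : f ∈ configAlgebra 2)
    {s : ℝ} (hs : |s| = 1) {p : ℕ} (hp : 2 ≤ p) :
    (Summable fun a : ℕ+ ↦ s ^ (a : ℤ) * ((a : ℝ)⁻¹) ^ p * f ![a, 0]) ∧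
      ∑' a : ℕ+, s ^ (a : ℤ) * ((a : ℝ)⁻¹) ^ p * f ![a, 0] ∈ zetaAlgebra := by
  induction hf using configAlgebra.induction_left generalizing s p with
  | one =>
    simp only [Pi.one_apply, mul_one]
    exact ⟨summable_pnat_sign_zpow_mul_inv_pow hs hp, tsum_pnat_sign_zpow_mul_inv_pow_mem hs hp⟩
  | add f g _ _ hf hg =>
    obtain ⟨hf, hfmem⟩ := hf hs hp
    obtain ⟨hg, hgmem⟩ := hg hs hp
    simp only [Pi.add_apply, mul_add]
    exact ⟨hf.add hg, hf.tsum_add hg ▸ add_mem hfmem hgmem⟩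
  | generator_mul x f hx _ hf =>
    have of_eq {b : ℝ} (hb : b ∈ zetaAlgebra) {t : ℝ} (ht : |t| = 1) {r : ℕ} (hr : 2 ≤ r)
        (h : ∀ a : ℕ+, s ^ (a : ℤ) * ((a : ℝ)⁻¹) ^ p * (x * f) ![a, 0]
          = b * (t ^ (a : ℤ) * ((a : ℝ)⁻¹) ^ r * f ![a, 0])) :
        (Summable fun a : ℕ+ ↦ s ^ (a : ℤ) * ((a : ℝ)⁻¹) ^ p * (x * f) ![a, 0]) ∧
          ∑' a : ℕ+, s ^ (a : ℤ) * ((a : ℝ)⁻¹) ^ p * (x * f) ![a, 0] ∈ zetaAlgebra := by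
      simp only [h, tsum_mul_left]
      exact ⟨(hf ht hr).1.mul_left b, mul_mem hb (hf ht hr).2⟩
    obtain ⟨h, hh, hxh⟩ | ⟨t, ht, hxt⟩ | ⟨b, hb, i, hxi⟩ := hx.cons_cases
    · refine of_eq (configAlgebra.apply_mem hh ![0]) hs hp fun a ↦ ?_
      rw [Pi.mul_apply, Matrix.vecCons, hxh]
      ring
    · refine of_eq (one_mem _) (abs_mul_eq_one hs ht) hp fun a ↦ ?_
      rw [Pi.mul_apply, Matrix.vecCons, hxt, mul_zpow]
      ring
    · refine of_eq hb hs (show 2 ≤ p + 1 by omega) fun a ↦ ?_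
      rw [Pi.mul_apply, Matrix.vecCons, hxi]
      simp only [Matrix.cons_val_fin_one, Int.cast_zero, Int.cast_natCast, sub_zero]
      ring

/-- The sign `s ^ (a + d + c)` divided by the product of the pairwise differences of the integer
points `0, a, d, c`, where `c - d` has exponent `q` and the other five have exponent `p`. As
`0⁻¹ = 0`, it vanishes when two of the points collide, provided that `p` and `q` are positive. -/
noncomputable def fourPointTerm (s : ℝ) (p q : ℕ) (v : ℕ+ × ℤ × ℤ) : ℝ :=
  s ^ (v.1 + v.2.1 + v.2.2 : ℤ) *
    ((v.1 * v.2.1 * (v.2.1 - v.1) * v.2.2 * (v.2.2 - v.1) : ℝ)⁻¹) ^ p *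
    ((v.2.2 - v.2.1 : ℝ)⁻¹) ^ q

section FourPointTerm

variable {s : ℝ} {p q : ℕ}

lemma fourPointTerm_eq_mul_poleProduct (hs : |s| = 1) (a : ℕ+) (d c : ℤ) :
    fourPointTerm s p q (a, d, c) = s ^ (a : ℤ) * ((a : ℝ)⁻¹) ^ p *
      (s ^ d * poleProduct ![(a : ℤ), 0] (.replicate p 0 + .replicate p 1) d) *
      (s ^ c * poleProduct ![d, a, 0] (.replicate q 0 + .replicate p 1 + .replicate p 2) c) := by
  simp only [fourPointTerm, poleProduct_add, poleProduct_replicate,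
    zpow_add₀ (ne_zero_of_abs_eq_one hs)]
  simp only [mul_inv, mul_pow, Matrix.cons_val, Int.cast_natCast, Int.cast_zero, sub_zero]
  ring

lemma injective_pnat_zero (a : ℕ+) : Function.Injective ![(a : ℤ), 0] :=
  injective_pair_iff_ne.2 (by simp)

lemma sign_zpow_mul_inv_pow_ne_zero (hs : |s| = 1) (p : ℕ) (a : ℕ+) :
    s ^ (a : ℤ) * ((a : ℝ)⁻¹) ^ p ≠ 0 :=
  mul_ne_zero (zpow_ne_zero _ (ne_zero_of_abs_eq_one hs)) (by simp)

lemma exists_tsum_fourPointTerm_eq (hs : |s| = 1) (hp : p ≠ 0) (hq : q ≠ 0)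
    (hT : Summable (fourPointTerm s p q)) :
    ∃ g ∈ configAlgebra 3, ∀ (a : ℕ+) (d : ℤ),
      ∑' c, fourPointTerm s p q (a, d, c) = s ^ (a : ℤ) * ((a : ℝ)⁻¹) ^ p *
        (s ^ d * poleProduct ![(a : ℤ), 0] (.replicate p 0 + .replicate p 1) d *
          g (Fin.cons d ![(a : ℤ), 0])) := by
  obtain ⟨g, hg, hsum⟩ := exists_tsum_poleProduct_mul_cons_eq (n := 3) (one_mem _) hs
    (M := .replicate q 0 + .replicate p 1 + .replicate p 2) fun i ↦ by
      fin_cases i <;> simp [Multiset.mem_replicate, hp, hq]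
  simp only [Pi.one_apply, mul_one] at hsum
  refine ⟨g, hg, fun a d ↦ ?_⟩
  have hfactor := (hT.prod_factor a).prod_factor d
  simp only [fourPointTerm_eq_mul_poleProduct hs] at hfactor ⊢
  rw [tsum_mul_left]
  by_cases hd : d ∈ Set.range ![(a : ℤ), 0]
  · obtain ⟨i, rfl⟩ := hd
    rw [poleProduct_apply_self _ (by fin_cases i <;> simp [Multiset.mem_replicate, hp])]
    simp
  · have hinj : Function.Injective ![d, a, 0] :=
      Fin.cons_injective_iff.2 ⟨hd, injective_pnat_zero a⟩
    rw [summable_mul_left_iff (mul_ne_zero (sign_zpow_mul_inv_pow_ne_zero hs p a) (mul_ne_zero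
      (zpow_ne_zero d (ne_zero_of_abs_eq_one hs)) (poleProduct_ne_zero hd _)))] at hfactor
    rw [hsum _ hinj hfactor]
    simp only [Matrix.vecCons, mul_assoc]

lemma exists_tsum_tsum_fourPointTerm_eq (hs : |s| = 1) (hp : p ≠ 0) (hq : q ≠ 0)
    (hT : Summable (fourPointTerm s p q)) :
    ∃ g ∈ configAlgebra 2, ∀ a : ℕ+,
      ∑' v : ℤ × ℤ, fourPointTerm s p q (a, v) = s ^ (a : ℤ) * ((a : ℝ)⁻¹) ^ p * g ![a, 0] := by
  obtain ⟨f, hf, hfsum⟩ := exists_tsum_fourPointTerm_eq hs hp hq hT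
  obtain ⟨g, hg, hsum⟩ := exists_tsum_poleProduct_mul_cons_eq hf hs
    (M := .replicate p 0 + .replicate p 1) fun i ↦ by
      fin_cases i <;> simp [Multiset.mem_replicate, hp]
  refine ⟨g, hg, fun a ↦ ?_⟩
  have hfactor := (hT.prod_factor a).prod
  rw [(hT.prod_factor a).tsum_prod]
  simp only [hfsum] at hfactor ⊢
  rw [summable_mul_left_iff (sign_zpow_mul_inv_pow_ne_zero hs p a)] at hfactor
  rw [tsum_mul_left, hsum _ (injective_pnat_zero a) hfactor]

theorem tsum_fourPointTerm_mem (hs : |s| = 1) (hp : 2 ≤ p) (hq : q ≠ 0)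
    (hT : Summable (fourPointTerm s p q)) : ∑' v, fourPointTerm s p q v ∈ zetaAlgebra := by
  obtain ⟨g, hg, hsum⟩ := exists_tsum_tsum_fourPointTerm_eq hs (by omega) hq hT
  rw [hT.tsum_prod]
  simp only [hsum]
  exact (tsum_pnat_sign_zpow_mul_inv_pow_mul_mem hg hs hp).2

end FourPointTerm

/-- The product of the positive roots of type `A₃` on the weight with coordinates `(l, m, n)`. -/
def rootProduct (t : ℕ+ × ℕ+ × ℕ+) : ℝ :=
  t.1 * t.2.1 * t.2.2 * (t.1 + t.2.1) * (t.2.1 + t.2.2) * (t.1 + t.2.1 + t.2.2)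

/-- The general term of the series of type `A₃` with equal exponents `p` and numerator
`s ^ (l + n)`. -/
noncomputable def rootTerm (s : ℝ) (p : ℕ) (t : ℕ+ × ℕ+ × ℕ+) : ℝ :=
  s ^ (t.1 + t.2.2 : ℤ) * ((rootProduct t)⁻¹) ^ p

/-- The configurations `0, a, d, c` with `c < d` whose successive gaps, in increasing order, are
`x, y, z`, encoded as the triples `(a, d, c)`; `i` runs over the six possible orderings. -/
def chamber (i : Fin 6) : ℕ+ × ℕ+ × ℕ+ → ℕ+ × ℤ × ℤ
  | (x, y, z) => match i with
    | 0 => (x, x + y + z, x + y)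
    | 1 => (z, -y, -(x + y))
    | 2 => (x + y + z, x + y, x)
    | 3 => (y, y + z, -x)
    | 4 => (x + y, x + y + z, x)
    | 5 => (y + z, y, -x)

/-- The distance `d - c` in `chamber i (x, y, z)`, with a minus sign when exactly one of `c` and `d`
lies between `0` and `a`. -/
def chamberWeight (i : Fin 6) : ℕ+ × ℕ+ × ℕ+ → ℝ
  | (x, y, z) => match i with
    | 0 => z
    | 1 => x
    | 2 => y
    | 3 => x + y + z
    | 4 => -(y + z)
    | 5 => -(x + y)

section Chambers

lemma chamber_injective :
    Function.Injective fun v : Fin 6 × ℕ+ × ℕ+ × ℕ+ ↦ chamber v.1 v.2 := by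
  rintro ⟨i, x, y, z⟩ ⟨j, x', y', z'⟩ h
  have := x.pos; have := y.pos; have := z.pos; have := x'.pos; have := y'.pos; have := z'.pos
  fin_cases i <;> fin_cases j <;>
    simp [chamber, ← PNat.coe_inj] at h ⊢ <;> omega

lemma exists_pnat_triple_eq {u v w : ℤ} (hu : 0 < u) (hv : 0 < v) (hw : 0 < w) :
    ∃ x y z : ℕ+, (x : ℤ) = u ∧ (y : ℤ) = v ∧ (z : ℤ) = w := by
  lift u to ℕ using hu.le
  lift v to ℕ using hv.le
  lift w to ℕ using hw.le
  exact ⟨⟨u, by omega⟩, ⟨v, by omega⟩, ⟨w, by omega⟩, rfl, rfl, rfl⟩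

lemma exists_chamber_eq {a : ℕ+} {d c : ℤ} (hcd : c < d) (hd0 : d ≠ 0) (hda : d ≠ a) (hc0 : c ≠ 0)
    (hca : c ≠ a) : ∃ v : Fin 6 × ℕ+ × ℕ+ × ℕ+, chamber v.1 v.2 = (a, d, c) := by
  have ha := a.pos
  have of_gaps (i : Fin 6) {u v w : ℤ} (hu : 0 < u) (hv : 0 < v) (hw : 0 < w)
      (h : ∀ x y z : ℕ+, (x : ℤ) = u → (y : ℤ) = v → (z : ℤ) = w →
        ((chamber i (x, y, z)).1 : ℤ) = a ∧ (chamber i (x, y, z)).2.1 = d ∧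
          (chamber i (x, y, z)).2.2 = c) :
      ∃ v : Fin 6 × ℕ+ × ℕ+ × ℕ+, chamber v.1 v.2 = (a, d, c) := by
    obtain ⟨x, y, z, hx, hy, hz⟩ := exists_pnat_triple_eq hu hv hw
    obtain ⟨h1, h2, h3⟩ := h x y z hx hy hz
    exact ⟨(i, x, y, z), Prod.ext (by simpa using h1) (Prod.ext h2 h3)⟩
  rcases hd0.lt_or_gt with hd | hd
  · exact of_gaps 1 (u := d - c) (v := -d) (w := a) (by omega) (by omega) (by omega)
      (by grind [chamber, PNat.add_coe])
  rcases hc0.lt_or_gt with hc | hc <;> rcases hda.lt_or_gt with hda | hda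
  · exact of_gaps 5 (u := -c) (v := d) (w := a - d) (by omega) (by omega) (by omega)
      (by grind [chamber, PNat.add_coe])
  · exact of_gaps 3 (u := -c) (v := a) (w := d - a) (by omega) (by omega) (by omega)
      (by grind [chamber, PNat.add_coe])
  · exact of_gaps 2 (u := c) (v := d - c) (w := a - d) (by omega) (by omega) (by omega)
      (by grind [chamber, PNat.add_coe])
  rcases hca.lt_or_gt with hca | hca
  · exact of_gaps 4 (u := c) (v := a - c) (w := d - a) (by omega) (by omega) (by omega)
      (by grind [chamber, PNat.add_coe])
  · exact of_gaps 0 (u := a) (v := c - a) (w := d - c) (by omega) (by omega) (by omega)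
      (by grind [chamber, PNat.add_coe])

lemma chamber_snd_snd_lt (i : Fin 6) (t : ℕ+ × ℕ+ × ℕ+) :
    (chamber i t).2.2 < (chamber i t).2.1 := by
  obtain ⟨x, y, z⟩ := t
  have := x.pos; have := y.pos; have := z.pos
  fin_cases i <;> simp only [chamber] <;> omega

lemma sum_chamberWeight (x y z : ℕ+) : ∑ i, chamberWeight i (x, y, z) = x + z := by
  simp only [Fin.sum_univ_six, chamberWeight]
  ring

lemma abs_chamberWeight_le (i : Fin 6) (x y z : ℕ+) :
    |chamberWeight i (x, y, z)| ≤ x + y + z := by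
  have hx : (0 : ℝ) < x := by simp
  have hy : (0 : ℝ) < y := by simp
  have hz : (0 : ℝ) < z := by simp
  rw [abs_le]
  fin_cases i <;> simp only [chamberWeight] <;> constructor <;> linarith

lemma even_chamber_sub (i : Fin 6) (t : ℕ+ × ℕ+ × ℕ+) :
    Even (((chamber i t).1 + (chamber i t).2.1 + (chamber i t).2.2 : ℤ) - (t.1 + t.2.2)) := by
  obtain ⟨x, y, z⟩ := t
  rw [Int.even_iff]
  fin_cases i <;> simp only [chamber, PNat.add_coe, Nat.cast_add] <;> omega

/-- The product of the six pairwise differences of the points `0, a, d, c`. -/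
def fourPointProduct (v : ℕ+ × ℤ × ℤ) : ℝ :=
  v.1 * v.2.1 * (v.2.1 - v.1) * v.2.2 * (v.2.2 - v.1) * (v.2.2 - v.2.1)

lemma fourPointProduct_chamber (i : Fin 6) (t : ℕ+ × ℕ+ × ℕ+) :
    ((chamber i t).2.2 - (chamber i t).2.1 : ℝ) = chamberWeight i t ∧
        fourPointProduct (chamber i t) = rootProduct t ∨
      ((chamber i t).2.2 - (chamber i t).2.1 : ℝ) = -chamberWeight i t ∧
        fourPointProduct (chamber i t) = -rootProduct t := by
  obtain ⟨x, y, z⟩ := t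
  fin_cases i
  iterate 4
    right
    constructor <;> simp only [chamber, chamberWeight, fourPointProduct, rootProduct] <;>
      push_cast <;> ring
  all_goals
    left
    constructor <;> simp only [chamber, chamberWeight, fourPointProduct, rootProduct] <;>
      push_cast <;> ring

lemma fourPointTerm_eq_sub_mul {s : ℝ} {q : ℕ} (hq : q ≠ 0) (v : ℕ+ × ℤ × ℤ) :
    fourPointTerm s (q + 1) q v = (v.2.2 - v.2.1) *
      (s ^ (v.1 + v.2.1 + v.2.2 : ℤ) * ((fourPointProduct v)⁻¹) ^ (q + 1)) := by
  rcases eq_or_ne ((v.2.2 : ℝ) - v.2.1) 0 with h | h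
  · simp [fourPointTerm, h, hq]
  · rw [fourPointTerm, fourPointProduct, mul_inv _ (v.2.2 - v.2.1 : ℝ), mul_pow,
      pow_succ ((v.2.2 - v.2.1 : ℝ)⁻¹)]
    field_simp

theorem fourPointTerm_chamber {s : ℝ} (hs : |s| = 1) {q : ℕ} (hq : q ≠ 0) (heven : Even q)
    (i : Fin 6) (t : ℕ+ × ℕ+ × ℕ+) :
    fourPointTerm s (q + 1) q (chamber i t) = chamberWeight i t * rootTerm s (q + 1) t := by
  rw [fourPointTerm_eq_sub_mul hq, zpow_eq_zpow_of_even_sub hs (even_chamber_sub i t), rootTerm]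
  obtain ⟨hw, hP⟩ | ⟨hw, hP⟩ := fourPointProduct_chamber i t
  · rw [hP, hw]
  · rw [hP, hw, inv_neg, heven.add_one.neg_pow]
    ring

lemma fourPointTerm_swap {s : ℝ} {p q : ℕ} (heven : Even q) (a : ℕ+) (d c : ℤ) :
    fourPointTerm s p q (a, c, d) = fourPointTerm s p q (a, d, c) := by
  simp only [fourPointTerm]
  rw [← neg_sub (c : ℝ) d, inv_neg, heven.neg_pow, add_right_comm]
  congr 3
  ring

end Chambers

section Summation

variable {s : ℝ} {p q : ℕ}

lemma one_le_mul_mul_pnat (x y z : ℕ+) : (1 : ℝ) ≤ x * y * z :=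
  mod_cast (one_le : 1 ≤ x * y * z)

lemma mul_sum_le_rootProduct (x y z : ℕ+) :
    (x * y * z : ℝ) * (x + y + z) ≤ rootProduct (x, y, z) := by
  have h : (1 : ℝ) ≤ (x + y) * (y + z) := mod_cast (one_le : 1 ≤ (x + y) * (y + z))
  calc (x * y * z : ℝ) * (x + y + z)
      ≤ (x * y * z : ℝ) * (x + y + z) * ((x + y) * (y + z)) :=
        le_mul_of_one_le_right (by positivity) h
    _ = rootProduct (x, y, z) := by
        simp only [rootProduct]
        ring

lemma rootProduct_pos (t : ℕ+ × ℕ+ × ℕ+) : 0 < rootProduct t := by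
  have h (x : ℕ+) : (0 : ℝ) < x := by simp
  have := h t.1; have := h t.2.1; have := h t.2.2
  rw [rootProduct]
  positivity

lemma mul_le_rootProduct (x y z : ℕ+) : (x * y * z : ℝ) ≤ rootProduct (x, y, z) := by
  have h : (1 : ℝ) ≤ x + y + z := mod_cast (one_le : 1 ≤ x + y + z)
  exact (le_mul_of_one_le_right (by positivity) h).trans (mul_sum_le_rootProduct x y z)

lemma abs_rootTerm (hs : |s| = 1) (p : ℕ) (t : ℕ+ × ℕ+ × ℕ+) :
    |rootTerm s p t| = ((rootProduct t)⁻¹) ^ p := by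
  rw [rootTerm, ← Real.norm_eq_abs, norm_sign_zpow_mul hs,
    Real.norm_of_nonneg (pow_nonneg (inv_nonneg.2 (rootProduct_pos t).le) p)]

lemma abs_mul_rootTerm_le (hs : |s| = 1) (hq : q ≠ 0) {x y z : ℕ+} {b : ℝ}
    (hb : |b| ≤ x + y + z) :
    |b * rootTerm s (q + 1) (x, y, z)|
      ≤ ((x : ℝ)⁻¹) ^ 2 * (((y : ℝ)⁻¹) ^ 2 * ((z : ℝ)⁻¹) ^ 2) := by
  have hpos := rootProduct_pos (x, y, z)
  have hle := mul_le_rootProduct x y z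
  have hfirst : |b| * (rootProduct (x, y, z))⁻¹ ≤ (x * y * z : ℝ)⁻¹ := by
    rw [← div_eq_mul_inv, div_le_iff₀ hpos, inv_mul_eq_div, le_div_iff₀ (by positivity), mul_comm]
    exact (mul_le_mul_of_nonneg_left hb (by positivity)).trans (mul_sum_le_rootProduct x y z)
  have hpow : ((rootProduct (x, y, z))⁻¹) ^ q ≤ (x * y * z : ℝ)⁻¹ :=
    (pow_le_of_le_one (by positivity)
      (inv_le_one_of_one_le₀ ((one_le_mul_mul_pnat x y z).trans hle)) hq).trans (by gcongr)
  calc |b * rootTerm s (q + 1) (x, y, z)|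
      = |b| * (rootProduct (x, y, z))⁻¹ * ((rootProduct (x, y, z))⁻¹) ^ q := by
        rw [abs_mul, abs_rootTerm hs, pow_succ]
        ring
    _ ≤ (x * y * z : ℝ)⁻¹ * (x * y * z : ℝ)⁻¹ := by gcongr
    _ = ((x : ℝ)⁻¹) ^ 2 * (((y : ℝ)⁻¹) ^ 2 * ((z : ℝ)⁻¹) ^ 2) := by
        simp only [mul_inv]
        ring

lemma summable_inv_sq_mul_inv_sq_mul_inv_sq :
    Summable fun t : ℕ+ × ℕ+ × ℕ+ ↦
      ((t.1 : ℝ)⁻¹) ^ 2 * (((t.2.1 : ℝ)⁻¹) ^ 2 * ((t.2.2 : ℝ)⁻¹) ^ 2) := by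
  have h : Summable fun a : ℕ+ ↦ ((a : ℝ)⁻¹) ^ 2 := by
    simpa only [one_zpow, one_mul] using summable_pnat_sign_zpow_mul_inv_pow abs_one le_rfl
  exact h.mul_of_nonneg (h.mul_of_nonneg h (fun _ ↦ by positivity) fun _ ↦ by positivity)
    (fun _ ↦ by positivity) fun _ ↦ by positivity

lemma summable_mul_rootTerm (hs : |s| = 1) (hq : q ≠ 0) {b : ℕ+ × ℕ+ × ℕ+ → ℝ}
    (hb : ∀ x y z, |b (x, y, z)| ≤ x + y + z) :
    Summable fun t ↦ b t * rootTerm s (q + 1) t :=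
  .of_norm_bounded summable_inv_sq_mul_inv_sq_mul_inv_sq fun t ↦
    abs_mul_rootTerm_le hs hq (hb t.1 t.2.1 t.2.2)

lemma summable_fst_mul_rootTerm (hs : |s| = 1) (hq : q ≠ 0) :
    Summable fun t : ℕ+ × ℕ+ × ℕ+ ↦ (t.1 : ℝ) * rootTerm s (q + 1) t :=
  summable_mul_rootTerm hs hq fun x y z ↦ by
    rw [abs_of_nonneg (by positivity), add_assoc]
    exact le_add_of_nonneg_right (by positivity)

lemma summable_chamberWeight_mul_rootTerm (hs : |s| = 1) (hq : q ≠ 0) :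
    Summable fun v : Fin 6 × ℕ+ × ℕ+ × ℕ+ ↦ chamberWeight v.1 v.2 * rootTerm s (q + 1) v.2 := by
  have hchamber (i : Fin 6) : Summable fun t ↦ ‖chamberWeight i t * rootTerm s (q + 1) t‖ :=
    (summable_mul_rootTerm hs hq (abs_chamberWeight_le i)).norm
  exact .of_norm ((summable_prod_of_nonneg fun _ ↦ norm_nonneg _).2 ⟨hchamber, .of_finite⟩)

lemma rootTerm_reverse (s : ℝ) (p : ℕ) (x y z : ℕ+) :
    rootTerm s p (z, y, x) = rootTerm s p (x, y, z) := by
  have hprod : rootProduct (z, y, x) = rootProduct (x, y, z) := by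
    simp only [rootProduct]
    ring
  rw [rootTerm, rootTerm, hprod, add_comm]

/-- Reversal of the order of the three gaps. -/
def reverseTriple : ℕ+ × ℕ+ × ℕ+ ≃ ℕ+ × ℕ+ × ℕ+ where
  toFun t := (t.2.2, t.2.1, t.1)
  invFun t := (t.2.2, t.2.1, t.1)

lemma hasSum_last_mul_rootTerm (hs : |s| = 1) (hq : q ≠ 0) :
    HasSum (fun t : ℕ+ × ℕ+ × ℕ+ ↦ (t.2.2 : ℝ) * rootTerm s (q + 1) t)
      (∑' t : ℕ+ × ℕ+ × ℕ+, (t.1 : ℝ) * rootTerm s (q + 1) t) := by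
  simpa only [Function.comp_def, reverseTriple, Equiv.coe_fn_mk, rootTerm_reverse] using
    reverseTriple.hasSum_iff.2 (summable_fst_mul_rootTerm hs hq).hasSum

lemma hasSum_chamberWeight_mul_rootTerm (hs : |s| = 1) (hq : q ≠ 0) :
    HasSum (fun v : Fin 6 × ℕ+ × ℕ+ × ℕ+ ↦ chamberWeight v.1 v.2 * rootTerm s (q + 1) v.2)
      (2 * ∑' t : ℕ+ × ℕ+ × ℕ+, (t.1 : ℝ) * rootTerm s (q + 1) t) := by
  have hsum := (summable_chamberWeight_mul_rootTerm hs hq).hasSum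
  have hinner := (((Equiv.prodComm _ (Fin 6)).hasSum_iff.2 hsum).prod_fiberwise fun t ↦
    hasSum_fintype fun i ↦ chamberWeight i t * rootTerm s (q + 1) t)
  have htotal (t : ℕ+ × ℕ+ × ℕ+) : ∑ i, chamberWeight i t * rootTerm s (q + 1) t =
      t.1 * rootTerm s (q + 1) t + t.2.2 * rootTerm s (q + 1) t := by
    rw [← Finset.sum_mul, sum_chamberWeight, add_mul]
  simp only [htotal] at hinner
  rw [two_mul, ← hinner.unique
    ((summable_fst_mul_rootTerm hs hq).hasSum.add (hasSum_last_mul_rootTerm hs hq))]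
  exact hsum

lemma fourPointTerm_eq_zero (hp : p ≠ 0) {a : ℕ+} {d c : ℤ}
    (h : d = 0 ∨ d = a ∨ c = 0 ∨ c = a) : fourPointTerm s p q (a, d, c) = 0 := by
  rcases h with rfl | rfl | rfl | rfl <;> simp [fourPointTerm, hp]

lemma fourPointTerm_self (hq : q ≠ 0) (a : ℕ+) (c : ℤ) : fourPointTerm s p q (a, c, c) = 0 := by
  simp [fourPointTerm, hq]

lemma hasSum_ite_lt_fourPointTerm (hs : |s| = 1) (hq : q ≠ 0) (heven : Even q) :
    HasSum (fun v : ℕ+ × ℤ × ℤ ↦ if v.2.2 < v.2.1 then fourPointTerm s (q + 1) q v else 0)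
      (2 * ∑' t : ℕ+ × ℕ+ × ℕ+, (t.1 : ℝ) * rootTerm s (q + 1) t) := by
  refine (chamber_injective.hasSum_iff ?_).1 ?_
  · rintro ⟨a, d, c⟩ hrange
    refine ite_eq_right_iff.2 fun hcd ↦ fourPointTerm_eq_zero q.succ_ne_zero ?_
    by_contra! h
    exact hrange (exists_chamber_eq hcd h.1 h.2.1 h.2.2.1 h.2.2.2)
  · simpa only [Function.comp_def, chamber_snd_snd_lt, if_true,
      fourPointTerm_chamber hs hq heven] using hasSum_chamberWeight_mul_rootTerm hs hq

theorem hasSum_fourPointTerm (hs : |s| = 1) (hq : q ≠ 0) (heven : Even q) :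
    HasSum (fourPointTerm s (q + 1) q)
      (4 * ∑' t : ℕ+ × ℕ+ × ℕ+, (t.1 : ℝ) * rootTerm s (q + 1) t) := by
  have hlt := hasSum_ite_lt_fourPointTerm hs hq heven
  have hgt := ((Equiv.refl ℕ+).prodCongr (Equiv.prodComm ℤ ℤ)).hasSum_iff.2 hlt
  convert hlt.add hgt using 1
  · ext ⟨a, d, c⟩
    rcases lt_trichotomy c d with h | rfl | h
    · simp [h, h.not_gt]
    · simp [fourPointTerm_self hq]
    · simp [h, h.not_gt, fourPointTerm_swap heven]
  · ring

theorem tsum_fst_mul_rootTerm_mem (hs : |s| = 1) (hq : q ≠ 0) (heven : Even q) :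
    ∑' t : ℕ+ × ℕ+ × ℕ+, (t.1 : ℝ) * rootTerm s (q + 1) t ∈ zetaAlgebra := by
  have hsum := hasSum_fourPointTerm hs hq heven
  have hmem := tsum_fourPointTerm_mem hs (by omega) hq hsum.summable
  rw [hsum.tsum_eq] at hmem
  simpa [Algebra.smul_def] using zetaAlgebra.smul_mem hmem (4⁻¹ : ℚ)

lemma Z3r_eq_tsum_fst_mul_rootTerm (s : ℝ) (q : ℕ) :
    Z3r (fun l _ n ↦ s ^ (l + n)) q (q + 1) (q + 1) (q + 1) (q + 1) (q + 1) =
      ∑' t : ℕ+ × ℕ+ × ℕ+, (t.1 : ℝ) * rootTerm s (q + 1) t := by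
  let e := Equiv.pnatEquivNat
  rw [Z3r, ← (e.prodCongr (e.prodCongr e)).tsum_eq]
  refine tsum_congr fun t ↦ ?_
  simp only [e, Equiv.prodCongr_apply, Prod.map_fst, Prod.map_snd, Equiv.pnatEquivNat_apply,
    PNat.natPred_add_one, rootTerm, rootProduct, ← Nat.cast_add, zpow_natCast]
  push_cast
  simp only [inv_pow, mul_pow]
  field_simp
  ring

end Summation

/-- Proposition 5.3 of Komori–Matsumoto–Tsumura: the values
`ζ₃((2k,2k+1,2k+1,2k+1,2k+1,2k+1),λ₂∨;SU(4))` and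
`ζ₃((2k,2k+1,2k+1,2k+1,2k+1,2k+1);A₃)` lie in the `ℚ`-algebra generated by
Riemann zeta values. -/
theorem zeta_values_in_Q_algebra (k : ℕ) (hk : 0 < k) :
    Zlam2r (2 * k) (2 * k + 1) (2 * k + 1) (2 * k + 1) (2 * k + 1) (2 * k + 1) ∈
        Algebra.adjoin ℚ zetaValues ∧
      ZA3r (2 * k) (2 * k + 1) (2 * k + 1) (2 * k + 1) (2 * k + 1) (2 * k + 1) ∈
        Algebra.adjoin ℚ zetaValues := by
  have hmem {s : ℝ} (hs : |s| = 1) :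
      Z3r (fun l _ n ↦ s ^ (l + n)) (2 * k) (2 * k + 1) (2 * k + 1) (2 * k + 1) (2 * k + 1)
        (2 * k + 1) ∈ zetaAlgebra := by
    rw [Z3r_eq_tsum_fst_mul_rootTerm]
    exact tsum_fst_mul_rootTerm_mem hs (by omega) (even_two_mul k)
  refine ⟨hmem (by simp), ?_⟩
  simpa only [ZA3r, one_pow] using hmem abs_one
end
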